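/- Fix a ∈ ℤ with a ≥ 2. For all f ∈ Ḣ^{a−1}_⋄ and B > 0 there exists C = C(ν, T, ‖f‖_{Ḣ^{a−1}}, a, B) > 0 such that for all θ, θ' ∈ Ḣ^a_⋄ with ‖θ‖_{Ḣ^a} + ‖θ'‖_{Ḣ^a} ≤ B, the quadratic remainder of the linearization satisfies sup_{0≤t≤T} ‖u_{θ'}(t) − u_θ(t) − 𝕀_θ[θ' − θ](t)‖_{Ḣ^a} ≤ C ‖θ' − θ‖²_{Ḣ^a}. -/

import Mathlib

open MeasureTheory Set
open scoped BigOperators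

noncomputable section

namespace NS2D

/-- Nonzero Fourier frequencies of the 2D torus `Ω = 𝕋²`. -/
def Freq : Type := {k : ℤ × ℤ // k ≠ 0}

/-- Squared Euclidean modulus `|k|²` of a frequency. -/
def knormSq (k : Freq) : ℝ := (k.1.1 : ℝ) ^ 2 + (k.1.2 : ℝ) ^ 2

/-- Eigenvalue `λ_k = 4π²|k|²` of the periodic Laplacian `−Δ`. -/
def lam (k : Freq) : ℝ := 4 * Real.pi ^ 2 * knormSq k

/-- A divergence-free mean-zero vector field `u ∈ Ḣ_⋄` (or, more generally, an
element of the scale `Ḣ^α_⋄`) on the torus is represented by its Fourier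
coefficients `c k` along the orthonormal basis
`e_k(x) = |k|⁻¹ (k₂, −k₁) exp(2πi k·x)` of divergence-free fields. -/
abbrev Coef : Type := Freq → ℂ

/-- Negation of a frequency. -/
def fneg (k : Freq) : Freq := ⟨-k.1, neg_ne_zero.mpr k.2⟩

/-- The conjugacy condition expressing that the coefficients `c` represent a
real-valued vector field (note `e_{−k} = − conj e_k`). -/
def IsReal (c : Coef) : Prop := ∀ k, c (fneg k) = - (starRingEnd ℂ) (c k)

/-- Squared homogeneous Sobolev norm `‖·‖²_{Ḣ^α} = Σ_k λ_k^α |c k|²`. -/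
def hSq (α : ℝ) (c : Coef) : ℝ := ∑' k, lam k ^ α * ‖c k‖ ^ 2

/-- Homogeneous Sobolev norm `‖·‖_{Ḣ^α}`. -/
def hN (α : ℝ) (c : Coef) : ℝ := Real.sqrt (hSq α c)

/-- Finiteness of the `Ḣ^α`-norm. -/
def FinH (α : ℝ) (c : Coef) : Prop := Summable fun k => lam k ^ α * ‖c k‖ ^ 2

/-- Membership in `Ḣ^α_⋄` (real-valued field with finite `Ḣ^α`-norm). -/
def MemH (α : ℝ) (c : Coef) : Prop := IsReal c ∧ FinH α c

/-- Membership in `Ḣ^∞_⋄ = C^∞(Ω)² ∩ Ḣ_⋄`: all Sobolev norms are finite. -/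
def MemHinf (c : Coef) : Prop := ∀ α : ℝ, MemH α c

/-- Real `Ḣ^α` inner product `⟨·,·⟩_{Ḣ^α}` (for real-valued fields). -/
def hInner (α : ℝ) (c d : Coef) : ℝ := ∑' k, lam k ^ α * (c k * (starRingEnd ℂ) (d k)).re

/-- The `L²` inner product. -/
def innerC (c d : Coef) : ℂ := ∑' k, c k * (starRingEnd ℂ) (d k)

/-- The unit vector `(k₂, −k₁)/|k|` spanning the divergence-free direction at
frequency `k`. -/
def evec (k : Freq) : ℝ × ℝ :=
  ((k.1.2 : ℝ) / Real.sqrt (knormSq k), -((k.1.1 : ℝ)) / Real.sqrt (knormSq k))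

/-- Euclidean dot product on `ℝ²`. -/
def dotR (a b : ℝ × ℝ) : ℝ := a.1 * b.1 + a.2 * b.2

/-- A frequency as a real vector. -/
def fvec (k : Freq) : ℝ × ℝ := ((k.1.1 : ℝ), (k.1.2 : ℝ))

/-- Fourier coefficients (along the basis `e_k`) of the Leray-projected
transport nonlinearity `B[u,v] = P[(u·∇)v]`:
`(B[u,v])^(k) · ē_k = 2πi Σ_{m+n=k, n≠0} c_m d_n (e_m·n)(e_n·e_k)`. -/
def Bc (c d : Coef) : Coef := fun k =>
  (((2 * Real.pi : ℝ) : ℂ) * Complex.I) *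
    ∑' m : Freq,
      if h : k.1 - m.1 ≠ 0 then
        c m * d ⟨k.1 - m.1, h⟩ *
          (((dotR (evec m) (fvec ⟨k.1 - m.1, h⟩) *
            dotR (evec ⟨k.1 - m.1, h⟩) (evec k) : ℝ)) : ℂ)
      else 0

/-- The Laplacian `Δ` acting on the scale: `(Δu)^(k) = −λ_k û(k)`. -/
def lapC (c : Coef) : Coef := fun k => -((lam k : ℝ) : ℂ) * c k

/-- Continuity of a trajectory `t ↦ u(t)`, `t ∈ [0,T]`, for the `Ḣ^α`-norm:
`u ∈ C([0,T], Ḣ^α_⋄)`. -/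
def ContH (α : ℝ) (T : ℝ) (u : ℝ → Coef) : Prop :=
  ∀ t ∈ Icc (0:ℝ) T, ∀ ε > 0, ∃ δ > 0, ∀ s ∈ Icc (0:ℝ) T,
    |s - t| < δ → hN α (u s - u t) < ε

/-- Membership `u ∈ L²([0,T], Ḣ^α_⋄)`. -/
def MemL2H (α : ℝ) (T : ℝ) (u : ℝ → Coef) : Prop :=
  (∀ t ∈ Ioc (0:ℝ) T, MemH α (u t)) ∧
    IntegrableOn (fun t => hSq α (u t)) (Ioc 0 T)

/-- `u` is a strong solution on `[0,T]` of the (Leray-projected) periodic 2D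
Navier–Stokes equations `du/dt + νAu + B[u,u] = f`, `u(0) = θ`, posed in `Ḣ_⋄`:
the Fourier coefficients satisfy the corresponding system of ODEs on `(0,T]`,
the trajectory is continuous into `Ḣ¹_⋄` (in particular at `t = 0`), and lies
in `L²([0,T], Ḣ²_⋄)`. -/
structure IsNSSol (ν : ℝ) (f : Coef) (T : ℝ) (θ : Coef) (u : ℝ → Coef) : Prop where
  init : u 0 = θ
  real : ∀ t ∈ Icc (0:ℝ) T, IsReal (u t)
  deriv : ∀ (k : Freq), ∀ t ∈ Ioc (0:ℝ) T,
    HasDerivAt (fun s => u s k)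
      (f k - ((ν * lam k : ℝ) : ℂ) * u t k - Bc (u t) (u t) k) t
  contH1 : ContH 1 T u
  memL2H2 : MemL2H 2 T u

/-- `U` solves the linear parabolic equation
`dU/dt − νΔU + B[u₀, U] + B[U, u₁] = g`, `U(0) = ξ`, on `[0,T]`. -/
structure IsLinPSol (ν : ℝ) (u₀ u₁ : ℝ → Coef) (g : ℝ → Coef) (T : ℝ) (ξ : Coef)
    (U : ℝ → Coef) : Prop where
  init : U 0 = ξ
  real : ∀ t ∈ Icc (0:ℝ) T, IsReal (U t)
  deriv : ∀ (k : Freq), ∀ t ∈ Ioc (0:ℝ) T,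
    HasDerivAt (fun s => U s k)
      (g t k - ((ν * lam k : ℝ) : ℂ) * U t k - Bc (u₀ t) (U t) k - Bc (U t) (u₁ t) k) t

/-- `U = 𝕀_θ[ξ]` solves the linearisation of Navier–Stokes along the
trajectory `u₀`: `dU/dt − νΔU + B[u₀,U] + B[U,u₀] = 0`, `U(0) = ξ`. -/
def IsLinSol (ν : ℝ) (u₀ : ℝ → Coef) (T : ℝ) (ξ : Coef) (U : ℝ → Coef) : Prop :=
  IsLinPSol ν u₀ u₀ (fun _ => 0) T ξ U

/-- The heat semigroup `S_t = e^{νtΔ}` on the scale `Ḣ^α_⋄`. -/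
def heatS (ν t : ℝ) (c : Coef) : Coef := fun k =>
  ((Real.exp (-(ν * lam k * t)) : ℝ) : ℂ) * c k

/-- Duhamel representation of the solution of the periodic heat equation
`du/dt − νΔu = g`, `u(0) = h`. -/
def heatSol (ν : ℝ) (g : ℝ → Coef) (h : Coef) : ℝ → Coef := fun t k =>
  ((Real.exp (-(ν * lam k * t)) : ℝ) : ℂ) *
    (h k + ∫ s in (0:ℝ)..t, ((Real.exp (ν * lam k * s) : ℝ) : ℂ) * g s k)

/-- Real-linearity of a map on the coefficient space. -/
def IsLinMap (Λ : Coef → Coef) : Prop :=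
  (∀ c d, Λ (c + d) = Λ c + Λ d) ∧ ∀ (r : ℝ) (c : Coef), Λ (r • c) = r • Λ c

/-- `Λ` defines a compact (linear) operator `Ḣ^α_⋄ → Ḣ^β_⋄`: it is linear,
maps `Ḣ^α_⋄` into `Ḣ^β_⋄`, and the image of the `Ḣ^α`-unit ball is totally
bounded for the `Ḣ^β`-norm. -/
def IsCompactOp (α β : ℝ) (Λ : Coef → Coef) : Prop :=
  IsLinMap Λ ∧ (∀ c, MemH α c → MemH β (Λ c)) ∧
    ∀ ε > 0, ∃ S : Finset Coef, ∀ c, MemH α c → hN α c ≤ 1 →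
      ∃ s ∈ S, hN β (Λ c - s) < ε

/-- The index `a* = |a|+1` if `|a| ≤ 1`, `a* = |a|` if `|a| ≥ 2`. -/
def astar (a : ℤ) : ℤ := if |a| ≤ 1 then |a| + 1 else |a|

/-- `i`-th component of the unit vector `evec k`. -/
def evecC (i : Fin 2) (k : Freq) : ℝ := if i = 0 then (evec k).1 else (evec k).2

/-- Fourier coefficients (over all of `ℤ²`) of the scalar component `u_i` of a
divergence-free field with coefficients `c`. -/
def compCoef (i : Fin 2) (c : Coef) : ℤ × ℤ → ℂ := fun n =>
  if h : n ≠ 0 then c ⟨n, h⟩ * ((evecC i ⟨n, h⟩ : ℝ) : ℂ) else 0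

/-- Convolution: Fourier coefficients of a pointwise product of two scalar
functions. -/
def convC (F G : ℤ × ℤ → ℂ) : ℤ × ℤ → ℂ := fun n => ∑' m : ℤ × ℤ, F m * G (n - m)

/-- Squared homogeneous Sobolev norm of a scalar function given by its Fourier
coefficients over `ℤ²`. -/
def hSqScalar (α : ℝ) (F : ℤ × ℤ → ℂ) : ℝ := ∑' k : Freq, lam k ^ α * ‖F k.1‖ ^ 2

/-- `‖u vᵀ‖²_{Ḣ^α} = Σ_{i,j=1}^2 ‖u_i v_j‖²_{Ḣ^α}`. -/
def hSqMat (α : ℝ) (c d : Coef) : ℝ :=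
  ∑ i : Fin 2, ∑ j : Fin 2, hSqScalar α (convC (compCoef i c) (compCoef j d))

/-- The character `exp(2πi k·x)`. -/
def efun (k : Freq) (x : ℝ × ℝ) : ℂ :=
  Complex.exp ((((2 * Real.pi : ℝ)) : ℂ) * Complex.I *
    ((k.1.1 : ℂ) * (x.1 : ℂ) + (k.1.2 : ℂ) * (x.2 : ℂ)))

/-- Pointwise evaluation of the `i`-th component of the field. -/
def evalComp (i : Fin 2) (c : Coef) (x : ℝ × ℝ) : ℂ :=
  ∑' k, c k * ((evecC i k : ℝ) : ℂ) * efun k x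

/-- Supremum norm (`C⁰`-norm) of the field. -/
def c0N (c : Coef) : ℝ := ⨆ x : ℝ × ℝ, max ‖evalComp 0 c x‖ ‖evalComp 1 c x‖

/-- The partial derivative `∂_j` acting on divergence-free fields. -/
def pderiv (j : Fin 2) (c : Coef) : Coef := fun k =>
  (((2 * Real.pi : ℝ) : ℂ) * Complex.I) *
    (if j = 0 then ((k.1.1 : ℤ) : ℂ) else ((k.1.2 : ℤ) : ℂ)) * c k

/-- `C¹`-norm of the field. -/
def c1N (c : Coef) : ℝ := c0N c + c0N (pderiv 0 c) + c0N (pderiv 1 c)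

/-- Norm of the multiplier space `B^ℓ`: `C^ℓ(Ω)²` for `ℓ ≤ 1` and `Ḣ^ℓ` for
`ℓ ≥ 2`. -/
def bN (ℓ : ℕ) (c : Coef) : ℝ :=
  if ℓ = 0 then c0N c else if ℓ = 1 then c1N c else hN (ℓ : ℝ) c

end NS2D

namespace NS2D
open scoped ENNReal NNReal

/-! ### Extended nonnegative toolkit -/

instance : Countable Freq := by unfold Freq; infer_instance
instance : DecidableEq Freq := by unfold Freq; infer_instance

lemma knormSq_ge (k : Freq) : 1 ≤ knormSq k := by
  obtain ⟨⟨x, y⟩, h⟩ := k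
  simp only [knormSq]
  have : (1 : ℤ) ≤ x ^ 2 + y ^ 2 := by
    by_contra hc
    push Not at hc
    have hx : x = 0 := by nlinarith [sq_nonneg x, sq_nonneg y]
    have hy : y = 0 := by nlinarith [sq_nonneg x, sq_nonneg y]
    exact h (by simp [hx, hy])
  exact_mod_cast this

lemma lam_ge (k : Freq) : 1 ≤ lam k := by
  have := knormSq_ge k
  have h3 := Real.pi_gt_three
  unfold lam
  nlinarith [mul_pos Real.pi_pos Real.pi_pos]

lemma lam_pos (k : Freq) : 0 < lam k := lt_of_lt_of_le one_pos (lam_ge k)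

/-- Extended Sobolev norm squared. -/
def eA (s : ℝ) (c : Coef) : ℝ≥0∞ := ∑' k, ENNReal.ofReal (lam k ^ s) * ‖c k‖ₑ ^ 2

/-- Extended Wiener norm. -/
def eL (c : Coef) : ℝ≥0∞ := ∑' k, ‖c k‖ₑ

lemma eA_term (s : ℝ) (c : Coef) (k : Freq) :
    ENNReal.ofReal (lam k ^ s) * ‖c k‖ₑ ^ 2 = ENNReal.ofReal (lam k ^ s * ‖c k‖ ^ 2) := by
  rw [ENNReal.ofReal_mul (Real.rpow_nonneg (lam_pos k).le s), ENNReal.ofReal_pow (norm_nonneg _),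
    ofReal_norm]

lemma term_nonneg (s : ℝ) (c : Coef) (k : Freq) : 0 ≤ lam k ^ s * ‖c k‖ ^ 2 :=
  mul_nonneg (Real.rpow_nonneg (lam_pos k).le s) (sq_nonneg _)

lemma eA_of_fin {s : ℝ} {c : Coef} (h : FinH s c) : eA s c = ENNReal.ofReal (hSq s c) := by
  unfold eA hSq
  rw [ENNReal.ofReal_tsum_of_nonneg (term_nonneg s c) h]
  exact tsum_congr (eA_term s c)

lemma eA_ne_top {s : ℝ} {c : Coef} (h : FinH s c) : eA s c ≠ ∞ := by
  rw [eA_of_fin h]; exact ENNReal.ofReal_ne_top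

lemma fin_of_eA {s : ℝ} {c : Coef} (h : eA s c ≠ ∞) : FinH s c := by
  unfold FinH
  have h2 : ∑' k, ENNReal.ofReal (lam k ^ s * ‖c k‖ ^ 2) ≠ ∞ := by
    rw [← tsum_congr (eA_term s c)]; exact h
  have := ENNReal.summable_toReal h2
  refine this.congr fun k => ?_
  rw [ENNReal.toReal_ofReal (term_nonneg s c k)]

lemma hSq_nonneg (s : ℝ) (c : Coef) : 0 ≤ hSq s c := tsum_nonneg (term_nonneg s c)

lemma hSq_eq_toReal {s : ℝ} {c : Coef} (h : FinH s c) : hSq s c = (eA s c).toReal := by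
  rw [eA_of_fin h, ENNReal.toReal_ofReal (hSq_nonneg s c)]

lemma eA_mono {s r : ℝ} (h : s ≤ r) (c : Coef) : eA s c ≤ eA r c := by
  unfold eA
  gcongr with k
  exact lam_ge k

lemma sq_add_le (x y : ℝ≥0∞) : (x + y) ^ 2 ≤ 4 * (x ^ 2 + y ^ 2) := by
  have h : x + y ≤ 2 * max x y := by
    rw [two_mul]; exact add_le_add (le_max_left _ _) (le_max_right _ _)
  calc (x + y) ^ 2 ≤ (2 * max x y) ^ 2 := by gcongr
    _ = 4 * (max x y) ^ 2 := by rw [mul_pow]; norm_num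
    _ ≤ 4 * (x ^ 2 + y ^ 2) := by
      gcongr
      rcases le_total x y with h | h
      · rw [max_eq_right h]; exact le_add_self
      · rw [max_eq_left h]; exact le_self_add

lemma mul_le_sq_add (x y : ℝ≥0∞) : x * y ≤ x ^ 2 + y ^ 2 := by
  rcases le_total x y with h | h
  · calc x * y ≤ y * y := by gcongr
      _ = y ^ 2 := (sq y).symm
      _ ≤ _ := le_add_self
  · calc x * y ≤ x * x := by gcongr
      _ = x ^ 2 := (sq x).symm
      _ ≤ _ := le_self_add

lemma eA_add_le (s : ℝ) (c d : Coef) : eA s (c + d) ≤ 4 * (eA s c + eA s d) := by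
  unfold eA
  rw [← ENNReal.tsum_add, ← ENNReal.tsum_mul_left]
  refine ENNReal.tsum_le_tsum fun k => ?_
  calc ENNReal.ofReal (lam k ^ s) * ‖(c + d) k‖ₑ ^ 2
      ≤ ENNReal.ofReal (lam k ^ s) * (4 * (‖c k‖ₑ ^ 2 + ‖d k‖ₑ ^ 2)) := by
        gcongr
        exact le_trans (by gcongr; exact enorm_add_le _ _) (sq_add_le _ _)
    _ = _ := by ring

lemma eA_neg (s : ℝ) (c : Coef) : eA s (-c) = eA s c := by
  unfold eA; simp

lemma eA_sub_le (s : ℝ) (c d : Coef) : eA s (c - d) ≤ 4 * (eA s c + eA s d) := by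
  rw [sub_eq_add_neg, ← eA_neg s d]; exact eA_add_le s c (-d)

lemma tsum_sq {ι : Type*} (f : ι → ℝ≥0∞) : (∑' i, f i) ^ 2 = ∑' i, ∑' j, f i * f j := by
  rw [sq, ← ENNReal.tsum_mul_right]
  exact tsum_congr fun i => ENNReal.tsum_mul_left.symm

/-- Cauchy-Schwarz with a lossy constant. -/
lemma cs_tsum {ι : Type*} (f g : ι → ℝ≥0∞) :
    (∑' i, f i * g i) ^ 2 ≤ 2 * ((∑' i, f i ^ 2) * ∑' i, g i ^ 2) := by
  rw [tsum_sq]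
  calc ∑' i, ∑' j, f i * g i * (f j * g j)
      ≤ ∑' i, ∑' j, (f i ^ 2 * g j ^ 2 + g i ^ 2 * f j ^ 2) := by
        refine ENNReal.tsum_le_tsum fun i => ENNReal.tsum_le_tsum fun j => ?_
        calc f i * g i * (f j * g j) = (f i * g j) * (g i * f j) := by ring
          _ ≤ (f i * g j) ^ 2 + (g i * f j) ^ 2 := mul_le_sq_add _ _
          _ = _ := by ring
    _ = _ := by
        simp_rw [ENNReal.tsum_add, ENNReal.tsum_mul_left, ENNReal.tsum_mul_right]
        ring

/-- Young's convolution inequality `ℓ¹ * ℓ² ⊆ ℓ²` with a lossy constant. -/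
lemma young_tsum {G : Type*} [AddCommGroup G] (f g : G → ℝ≥0∞) :
    ∑' k, (∑' m, f m * g (k - m)) ^ 2 ≤ 2 * ((∑' m, f m) ^ 2 * ∑' m, g m ^ 2) := by
  have hg : ∀ m, ∑' k, g (k - m) ^ 2 = ∑' k, g k ^ 2 := fun m =>
    (Equiv.subRight m).tsum_eq (fun k => g k ^ 2)
  calc ∑' k, (∑' m, f m * g (k - m)) ^ 2
      ≤ ∑' k, ∑' i, ∑' j, (f i * f j * g (k - i) ^ 2 + f i * f j * g (k - j) ^ 2) := by
        refine ENNReal.tsum_le_tsum fun k => ?_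
        rw [tsum_sq]
        refine ENNReal.tsum_le_tsum fun i => ENNReal.tsum_le_tsum fun j => ?_
        calc f i * g (k - i) * (f j * g (k - j)) = f i * f j * (g (k - i) * g (k - j)) := by ring
          _ ≤ f i * f j * (g (k - i) ^ 2 + g (k - j) ^ 2) := by gcongr; exact mul_le_sq_add _ _
          _ = _ := by ring
    _ = ∑' i, ∑' j, ∑' k, (f i * f j * g (k - i) ^ 2 + f i * f j * g (k - j) ^ 2) := by
        rw [ENNReal.tsum_comm]
        exact tsum_congr fun i => ENNReal.tsum_comm
    _ = 2 * ((∑' m, f m) ^ 2 * ∑' m, g m ^ 2) := by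
        rw [tsum_sq]
        simp only [ENNReal.tsum_add, ENNReal.tsum_mul_left, hg, ENNReal.tsum_mul_right]
        ring

lemma young_tsum' {G : Type*} [AddCommGroup G] (f g : G → ℝ≥0∞) :
    ∑' k, (∑' m, g m * f (k - m)) ^ 2 ≤ 2 * ((∑' m, f m) ^ 2 * ∑' m, g m ^ 2) := by
  refine le_trans (le_of_eq ?_) (young_tsum f g)
  refine tsum_congr fun k => ?_
  rw [← (Equiv.subLeft k).tsum_eq (fun m => f m * g (k - m))]
  simp [mul_comm]

/-! ### Extension by zero to the full lattice -/

/-- Extension by zero to the lattice. -/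
def ext0 {α : Type*} [Zero α] (c : Freq → α) : ℤ × ℤ → α := fun n =>
  open Classical in if h : n ≠ 0 then c ⟨n, h⟩ else 0

lemma ext0_val {α : Type*} [Zero α] (c : Freq → α) (k : Freq) : ext0 c k.1 = c k := by
  obtain ⟨n, h⟩ := k
  simp [ext0, h]

lemma ext0_zero {α : Type*} [Zero α] (c : Freq → α) : ext0 c 0 = 0 := by simp [ext0]

lemma ext0_of {α : Type*} [Zero α] (c : Freq → α) {n : ℤ × ℤ} (h : n ≠ 0) :
    ext0 c n = c ⟨n, h⟩ := by simp [ext0, h]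

lemma tsum_freq {α : Type*} [AddCommMonoid α] [TopologicalSpace α]
    (F : ℤ × ℤ → α) (h : F 0 = 0) : ∑' k : Freq, F k.1 = ∑' n, F n := by
  refine Function.Injective.tsum_eq (g := fun k : Freq => k.1) Subtype.val_injective ?_
  intro n hn
  refine ⟨⟨n, ?_⟩, rfl⟩
  rintro rfl
  exact hn h

/-- `2π|n|` -/
def qz (n : ℤ × ℤ) : ℝ := 2 * Real.pi * Real.sqrt ((n.1 : ℝ) ^ 2 + (n.2 : ℝ) ^ 2)

lemma qz_nonneg (n : ℤ × ℤ) : 0 ≤ qz n := by unfold qz; positivity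

lemma qz_sq (k : Freq) : qz k.1 ^ 2 = lam k := by
  unfold qz lam knormSq
  rw [mul_pow, Real.sq_sqrt (by positivity)]; ring

lemma qz_rpow (k : Freq) (s : ℝ) : (qz k.1 ^ s) ^ 2 = lam k ^ s := by
  rw [← qz_sq, ← Real.rpow_natCast, ← Real.rpow_natCast, ← Real.rpow_mul (qz_nonneg _),
    ← Real.rpow_mul (qz_nonneg _), mul_comm]

lemma sqrt_add_le (x y z w : ℝ) :
    Real.sqrt ((x + z) ^ 2 + (y + w) ^ 2) ≤ Real.sqrt (x ^ 2 + y ^ 2) + Real.sqrt (z ^ 2 + w ^ 2) := by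
  have h1 := Real.sq_sqrt (show 0 ≤ x ^ 2 + y ^ 2 by positivity)
  have h2 := Real.sq_sqrt (show 0 ≤ z ^ 2 + w ^ 2 by positivity)
  have h3 := Real.sqrt_nonneg (x ^ 2 + y ^ 2)
  have h4 := Real.sqrt_nonneg (z ^ 2 + w ^ 2)
  apply Real.sqrt_le_iff.2 ⟨by positivity, ?_⟩
  have : x * z + y * w ≤ Real.sqrt (x ^ 2 + y ^ 2) * Real.sqrt (z ^ 2 + w ^ 2) := by
    rw [← Real.sqrt_mul (by positivity)]
    apply Real.le_sqrt_of_sq_le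
    nlinarith [sq_nonneg (x * w - y * z)]
  nlinarith

lemma qz_le (k m : ℤ × ℤ) : qz k ≤ qz m + qz (k - m) := by
  unfold qz
  have := sqrt_add_le (m.1 : ℝ) m.2 ((k - m).1 : ℝ) (k - m).2
  simp only [Prod.fst_sub, Prod.snd_sub, Int.cast_sub, add_sub_cancel] at this ⊢
  nlinarith [Real.pi_pos]

/-- The elementary symbol inequality. -/
lemma symbol_le {s : ℝ} (hs : 1 ≤ s) (k m : ℤ × ℤ) :
    qz k ^ (s - 1) * qz (k - m) ≤ 2 ^ s * (qz m ^ s + qz (k - m) ^ s) := by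
  have hm := qz_nonneg m
  have hn := qz_nonneg (k - m)
  have hk := qz_nonneg k
  set M := max (qz m) (qz (k - m)) with hM
  have hM0 : 0 ≤ M := le_max_of_le_left hm
  have h1 : qz k ≤ 2 * M := by
    have := qz_le k m
    have := le_max_left (qz m) (qz (k - m))
    have := le_max_right (qz m) (qz (k - m))
    linarith
  have h2 : qz (k - m) ≤ 2 * M := by
    have := le_max_right (qz m) (qz (k - m)); linarith
  calc qz k ^ (s - 1) * qz (k - m) ≤ (2 * M) ^ (s - 1) * (2 * M) := by
        gcongr
    _ = (2 * M) ^ s := by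
        rcases hM0.eq_or_lt with h | h
        · rw [← h]; simp [Real.zero_rpow (by linarith : s ≠ 0)]
        · rw [Real.rpow_sub_one (by positivity)]; field_simp
    _ = 2 ^ s * M ^ s := Real.mul_rpow (by norm_num) hM0
    _ ≤ _ := by
        gcongr
        rcases le_total (qz m) (qz (k - m)) with h | h
        · rw [hM, max_eq_right h]; have := Real.rpow_nonneg hm s; linarith
        · rw [hM, max_eq_left h]; have := Real.rpow_nonneg hn s; linarith

/-- The summand of the bilinear form. -/
def bterm (c d : Coef) (k m : Freq) : ℂ :=
  open Classical in
  if h : k.1 - m.1 ≠ 0 then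
        c m * d ⟨k.1 - m.1, h⟩ *
          (((dotR (evec m) (fvec ⟨k.1 - m.1, h⟩) *
            dotR (evec ⟨k.1 - m.1, h⟩) (evec k) : ℝ)) : ℂ)
      else 0

lemma Bc_eq (c d : Coef) (k : Freq) :
    Bc c d k = (((2 * Real.pi : ℝ) : ℂ) * Complex.I) * ∑' m, bterm c d k m := by
  unfold Bc bterm
  congr 1

end NS2D

namespace NS2D
open scoped ENNReal NNReal

/-! ### The bilinear estimate -/

lemma evec_sq (k : Freq) : (evec k).1 ^ 2 + (evec k).2 ^ 2 = 1 := by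
  have h := knormSq_ge k
  have h2 := Real.sq_sqrt (show 0 ≤ knormSq k by linarith)
  have h3 : Real.sqrt (knormSq k) ≠ 0 := by
    intro h0; rw [h0] at h2; simp at h2; linarith
  simp only [evec]
  rw [div_pow, div_pow, h2]
  unfold knormSq at h ⊢
  field_simp
  ring

lemma dotR_sq_le (a b : ℝ × ℝ) : dotR a b ^ 2 ≤ (a.1 ^ 2 + a.2 ^ 2) * (b.1 ^ 2 + b.2 ^ 2) := by
  unfold dotR; nlinarith [sq_nonneg (a.1 * b.2 - a.2 * b.1)]

lemma dot_ee (n k : Freq) : |dotR (evec n) (evec k)| ≤ 1 := by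
  have := dotR_sq_le (evec n) (evec k)
  rw [evec_sq, evec_sq] at this
  simpa using this

lemma dot_ev (m n : Freq) : 2 * Real.pi * |dotR (evec m) (fvec n)| ≤ qz n.1 := by
  have h := dotR_sq_le (evec m) (fvec n)
  rw [evec_sq, one_mul] at h
  unfold qz
  gcongr
  exact Real.abs_le_sqrt h

/-- enorm of the coefficients, extended by zero -/
def eC (c : Coef) : ℤ × ℤ → ℝ≥0∞ := ext0 fun k => ‖c k‖ₑ

lemma enorm_bterm (c d : Coef) (k m : Freq) :
    ‖(((2 * Real.pi : ℝ) : ℂ) * Complex.I) * bterm c d k m‖ₑ ≤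
      eC c m.1 * (ENNReal.ofReal (qz (k.1 - m.1)) * eC d (k.1 - m.1)) := by
  unfold bterm
  split_ifs with h
  · rw [eC, ext0_val, eC, ext0_of _ h]
    set n : Freq := ⟨k.1 - m.1, h⟩ with hn
    have hq : qz (k.1 - m.1) = qz n.1 := rfl
    have h1 := dot_ev m n
    have h2 := dot_ee n k
    rw [← ofReal_norm, ← ofReal_norm, ← ofReal_norm, ← ENNReal.ofReal_mul (qz_nonneg _),
      ← ENNReal.ofReal_mul (norm_nonneg _)]
    apply ENNReal.ofReal_le_ofReal
    rw [hq]
    simp only [norm_mul, Complex.norm_real, Complex.norm_I, Real.norm_eq_abs,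
      abs_of_pos Real.pi_pos, mul_one, abs_two]
    calc 2 * Real.pi * (‖c m‖ * ‖d n‖ * (|dotR (evec m) (fvec n)| * |dotR (evec n) (evec k)|))
        = ‖c m‖ * ((2 * Real.pi * |dotR (evec m) (fvec n)|) * ‖d n‖) * |dotR (evec n) (evec k)| := by
          ring
      _ ≤ ‖c m‖ * (qz n.1 * ‖d n‖) * 1 := by
          have := qz_nonneg n.1
          gcongr
      _ = _ := mul_one _
  · simp

/-- The majorant of the bilinear form. -/
def eT (c d : Coef) (k : ℤ × ℤ) : ℝ≥0∞ :=
  ∑' m, eC c m * (ENNReal.ofReal (qz (k - m)) * eC d (k - m))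

lemma tsum_bterm_le (c d : Coef) (k : Freq) :
    ∑' m, ‖(((2 * Real.pi : ℝ) : ℂ) * Complex.I) * bterm c d k m‖ₑ ≤ eT c d k.1 := by
  unfold eT
  rw [← tsum_freq _ (by simp [eC, ext0_zero])]
  exact ENNReal.tsum_le_tsum fun m => enorm_bterm c d k m

lemma enorm_Bc (c d : Coef) (k : Freq) : ‖Bc c d k‖ₑ ≤ eT c d k.1 := by
  rw [Bc_eq, ← tsum_mul_left]
  exact le_trans enorm_tsum_le_tsum_enorm (tsum_bterm_le c d k)

lemma tsum_eC (c : Coef) : ∑' n, eC c n = eL c := by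
  rw [← tsum_freq _ (by simp [eC, ext0_zero])]
  simp [eC, ext0_val, eL]

lemma tsum_q_eC (s : ℝ) (c : Coef) :
    ∑' n, (ENNReal.ofReal (qz n ^ s) * eC c n) ^ 2 = eA s c := by
  rw [← tsum_freq _ (by simp [eC, ext0_zero])]
  unfold eA
  refine tsum_congr fun k => ?_
  rw [mul_pow, ← ENNReal.ofReal_pow (Real.rpow_nonneg (qz_nonneg _) _), qz_rpow, eC, ext0_val]

/-- Constant of the bilinear estimate. -/
def kc (s : ℝ) : ℝ≥0∞ := ENNReal.ofReal (2 ^ s) ^ 2 * 8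

lemma kc_ne_top (s : ℝ) : kc s ≠ ∞ := by unfold kc; finiteness

lemma conv_est {s : ℝ} (hs : 1 ≤ s) (c d : Coef) :
    ∑' k : Freq, ENNReal.ofReal (lam k ^ (s - 1)) * eT c d k.1 ^ 2 ≤
      kc s * (eA s c * eL d ^ 2 + eL c ^ 2 * eA s d) := by
  set F : ℤ × ℤ → ℝ≥0∞ := fun n => ENNReal.ofReal (qz n ^ s) * eC c n with hF
  set G : ℤ × ℤ → ℝ≥0∞ := fun n => ENNReal.ofReal (qz n ^ s) * eC d n with hG
  have key : ∀ k : ℤ × ℤ, ENNReal.ofReal (qz k ^ (s - 1)) * eT c d k ≤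
      ENNReal.ofReal (2 ^ s) * (∑' m, F m * eC d (k - m) + ∑' m, eC c m * G (k - m)) := by
    intro k
    unfold eT
    rw [← ENNReal.tsum_mul_left, ← ENNReal.tsum_add, ← ENNReal.tsum_mul_left]
    refine ENNReal.tsum_le_tsum fun m => ?_
    have h := ENNReal.ofReal_le_ofReal (symbol_le hs k m)
    have p1 := Real.rpow_nonneg (qz_nonneg m) s
    have p2 := Real.rpow_nonneg (qz_nonneg (k - m)) s
    have p3 := Real.rpow_nonneg (qz_nonneg k) (s - 1)
    rw [ENNReal.ofReal_mul p3, ENNReal.ofReal_mul (by positivity), ENNReal.ofReal_add p1 p2] at h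
    calc ENNReal.ofReal (qz k ^ (s - 1)) * (eC c m * (ENNReal.ofReal (qz (k - m)) * eC d (k - m)))
        = (ENNReal.ofReal (qz k ^ (s - 1)) * ENNReal.ofReal (qz (k - m))) *
          (eC c m * eC d (k - m)) := by ring
      _ ≤ _ := mul_le_mul_left h _
      _ = _ := by simp only [hF, hG]; ring
  calc ∑' k : Freq, ENNReal.ofReal (lam k ^ (s - 1)) * eT c d k.1 ^ 2
      = ∑' k : Freq, (ENNReal.ofReal (qz k.1 ^ (s - 1)) * eT c d k.1) ^ 2 := by
        refine tsum_congr fun k => ?_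
        rw [mul_pow, ← ENNReal.ofReal_pow (Real.rpow_nonneg (qz_nonneg _) _), qz_rpow]
    _ ≤ ∑' k : ℤ × ℤ, (ENNReal.ofReal (qz k ^ (s - 1)) * eT c d k) ^ 2 :=
        ENNReal.tsum_comp_le_tsum_of_injective (f := fun k : Freq => k.1) Subtype.val_injective
          (fun k : ℤ × ℤ => (ENNReal.ofReal (qz k ^ (s - 1)) * eT c d k) ^ 2)
    _ ≤ ∑' k : ℤ × ℤ, ENNReal.ofReal (2 ^ s) ^ 2 * (4 * ((∑' m, F m * eC d (k - m)) ^ 2 +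
          (∑' m, eC c m * G (k - m)) ^ 2)) := by
        refine ENNReal.tsum_le_tsum fun k => ?_
        calc _ ≤ _ := pow_le_pow_left' (key k) 2
          _ = _ := mul_pow _ _ _
          _ ≤ _ := by gcongr; exact sq_add_le _ _
    _ = ENNReal.ofReal (2 ^ s) ^ 2 * (4 * (∑' k, (∑' m, F m * eC d (k - m)) ^ 2 +
          ∑' k, (∑' m, eC c m * G (k - m)) ^ 2)) := by
        rw [ENNReal.tsum_mul_left, ENNReal.tsum_mul_left, ENNReal.tsum_add]
    _ ≤ ENNReal.ofReal (2 ^ s) ^ 2 * (4 * (2 * ((∑' m, eC d m) ^ 2 * ∑' m, F m ^ 2) +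
          2 * ((∑' m, eC c m) ^ 2 * ∑' m, G m ^ 2))) := by
        gcongr
        · exact young_tsum' (eC d) F
        · exact young_tsum (eC c) G
    _ = _ := by
        simp only [hF, hG, tsum_q_eC, tsum_eC, kc]; ring

lemma summable_lam : Summable fun k : Freq => lam k ^ (-(3 / 2) : ℝ) := by
  have h := EisensteinSeries.summable_one_div_norm_rpow (k := 3) (by norm_num)
  have hinj : Function.Injective (fun k : Freq => (![k.1.1, k.1.2] : Fin 2 → ℤ)) := by
    rintro ⟨⟨a, b⟩, h⟩ ⟨⟨a', b'⟩, h'⟩ he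
    have h0 := congrFun he 0
    have h1 := congrFun he 1
    simp at h0 h1
    subst h0 h1
    rfl
  refine (h.comp_injective hinj).of_nonneg_of_le
    (fun k => Real.rpow_nonneg (lam_pos k).le _) fun k => ?_
  simp only [Function.comp]
  set v : Fin 2 → ℤ := ![k.1.1, k.1.2] with hv
  have hv0 : v ≠ 0 := by
    intro h0
    apply k.2
    have h1 := congrFun h0 0
    have h2 := congrFun h0 1
    simp [hv] at h1 h2
    exact Prod.ext h1 h2
  have hvp : 0 < ‖v‖ := norm_pos_iff.2 hv0
  have hle : ‖v‖ ^ 2 ≤ lam k := by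
    have h1 : ‖v‖ ≤ Real.sqrt (knormSq k) := by
      rw [pi_norm_le_iff_of_nonneg (Real.sqrt_nonneg _)]
      intro i
      fin_cases i
      · simp only [hv, Int.norm_eq_abs]
        apply Real.abs_le_sqrt
        simp [knormSq]; positivity
      · simp only [hv, Int.norm_eq_abs]
        apply Real.abs_le_sqrt
        simp [knormSq]; positivity
    have h2 : ‖v‖ ^ 2 ≤ knormSq k := by
      have := Real.sq_sqrt (show 0 ≤ knormSq k by have := knormSq_ge k; linarith)
      rw [← this]; gcongr
    have := knormSq_ge k
    have := Real.pi_gt_three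
    unfold lam
    have h9 : 1 ≤ 4 * Real.pi ^ 2 := by nlinarith
    nlinarith
  calc lam k ^ (-(3 / 2) : ℝ) ≤ (‖v‖ ^ 2) ^ (-(3 / 2) : ℝ) :=
        Real.rpow_le_rpow_of_nonpos (by positivity) hle (by norm_num)
    _ = ‖v‖ ^ (-3 : ℝ) := by
        rw [← Real.rpow_natCast, ← Real.rpow_mul hvp.le]; norm_num

/-- Constant of the embedding of `H^{3/2}` into the Wiener algebra. -/
def ke : ℝ≥0∞ := 2 * ∑' k : Freq, ENNReal.ofReal (lam k ^ (-(3 / 2) : ℝ))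

lemma ke_ne_top : ke ≠ ∞ := by
  unfold ke
  rw [← ENNReal.ofReal_tsum_of_nonneg (fun k => Real.rpow_nonneg (lam_pos k).le _) summable_lam]
  finiteness

lemma eL_sq_le (c : Coef) : eL c ^ 2 ≤ ke * eA (3 / 2) c := by
  have h := cs_tsum (fun k : Freq => ENNReal.ofReal (lam k ^ (-(3 / 4) : ℝ)))
    (fun k => ENNReal.ofReal (lam k ^ (3 / 4 : ℝ)) * ‖c k‖ₑ)
  have e1 : ∀ k : Freq, ENNReal.ofReal (lam k ^ (-(3 / 4) : ℝ)) *
      (ENNReal.ofReal (lam k ^ (3 / 4 : ℝ)) * ‖c k‖ₑ) = ‖c k‖ₑ := fun k => by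
    rw [← mul_assoc, ← ENNReal.ofReal_mul (Real.rpow_nonneg (lam_pos k).le _),
      ← Real.rpow_add (lam_pos k)]
    norm_num
  have e2 : ∀ (k : Freq) (r : ℝ), ENNReal.ofReal (lam k ^ r) ^ 2 = ENNReal.ofReal (lam k ^ (2 * r)) :=
    fun k r => by
    rw [← ENNReal.ofReal_pow (Real.rpow_nonneg (lam_pos k).le _), ← Real.rpow_natCast,
      ← Real.rpow_mul (lam_pos k).le, mul_comm]; norm_num
  simp only [e1, mul_pow, e2] at h
  norm_num at h
  unfold eL ke eA
  norm_num
  rw [mul_assoc]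
  exact h

lemma eA_interp (c : Coef) : eA (3 / 2) c ^ 2 ≤ 2 * (eA 1 c * eA 2 c) := by
  have h := cs_tsum (fun k : Freq => ENNReal.ofReal (lam k ^ (1 / 2 : ℝ)) * ‖c k‖ₑ)
    (fun k => ENNReal.ofReal (lam k ^ (1 : ℝ)) * ‖c k‖ₑ)
  have e1 : ∀ k : Freq, ENNReal.ofReal (lam k ^ (1 / 2 : ℝ)) * ‖c k‖ₑ *
      (ENNReal.ofReal (lam k ^ (1 : ℝ)) * ‖c k‖ₑ) = ENNReal.ofReal (lam k ^ (3 / 2 : ℝ)) * ‖c k‖ₑ ^ 2 := fun k => by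
    rw [show (3 / 2 : ℝ) = 1 / 2 + 1 by norm_num, Real.rpow_add (lam_pos k),
      ENNReal.ofReal_mul (Real.rpow_nonneg (lam_pos k).le _)]
    ring
  have e2 : ∀ (k : Freq) (r : ℝ), ENNReal.ofReal (lam k ^ r) ^ 2 = ENNReal.ofReal (lam k ^ (2 * r)) :=
    fun k r => by
    rw [← ENNReal.ofReal_pow (Real.rpow_nonneg (lam_pos k).le _), ← Real.rpow_natCast,
      ← Real.rpow_mul (lam_pos k).le, mul_comm]; norm_num
  simp only [e1] at h
  simp only [mul_pow, e2] at h
  rw [show (2 * (1 / 2) : ℝ) = 1 by norm_num, show (2 * 1 : ℝ) = 2 by norm_num] at h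
  exact h

/-- Constant of the Sobolev bilinear estimate. -/
def kb (s : ℝ) : ℝ≥0∞ := kc s * ke

lemma kb_ne_top (s : ℝ) : kb s ≠ ∞ := ENNReal.mul_ne_top (kc_ne_top s) ke_ne_top

lemma conv_est' {s : ℝ} (hs : 1 ≤ s) (c d : Coef) :
    ∑' k : Freq, ENNReal.ofReal (lam k ^ (s - 1)) * eT c d k.1 ^ 2 ≤
      kb s * (eA s c * eA (3 / 2) d + eA (3 / 2) c * eA s d) := by
  refine (conv_est hs c d).trans ?_
  calc kc s * (eA s c * eL d ^ 2 + eL c ^ 2 * eA s d)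
      ≤ kc s * (eA s c * (ke * eA (3 / 2) d) + ke * eA (3 / 2) c * eA s d) := by
        gcongr <;> exact eL_sq_le _
    _ = _ := by unfold kb; ring

lemma eA_Bc {s : ℝ} (hs : 1 ≤ s) (c d : Coef) :
    eA (s - 1) (Bc c d) ≤ kb s * (eA s c * eA (3 / 2) d + eA (3 / 2) c * eA s d) := by
  refine le_trans ?_ (conv_est' hs c d)
  unfold eA
  gcongr with k
  exact enorm_Bc c d k

lemma eA_Bc' {s : ℝ} (hs : 3 / 2 ≤ s) (c d : Coef) :
    eA (s - 1) (Bc c d) ≤ 2 * kb s * (eA s c * eA s d) := by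
  refine (eA_Bc (by linarith) c d).trans ?_
  calc kb s * (eA s c * eA (3 / 2) d + eA (3 / 2) c * eA s d)
      ≤ kb s * (eA s c * eA s d + eA s c * eA s d) := by
        gcongr <;> exact eA_mono hs _
    _ = _ := by ring

lemma eT_lt_top {c d : Coef} (hc : eA (3 / 2) c ≠ ∞) (hd : eA (3 / 2) d ≠ ∞) (k : Freq) :
    eT c d k.1 ≠ ∞ := by
  have h := conv_est' (s := 1) le_rfl c d
  have hc1 : eA 1 c ≠ ∞ := ne_top_of_le_ne_top hc (eA_mono (by norm_num) c)
  have hd1 : eA 1 d ≠ ∞ := ne_top_of_le_ne_top hd (eA_mono (by norm_num) d)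
  have h2 : kb 1 * (eA 1 c * eA (3 / 2) d + eA (3 / 2) c * eA 1 d) ≠ ∞ := by
    have := kb_ne_top 1
    finiteness
  have h3 := ne_top_of_le_ne_top h2 ((ENNReal.le_tsum k).trans h)
  intro h4
  apply h3
  rw [h4]
  simp

lemma bterm_summable {c d : Coef} (hc : eA (3 / 2) c ≠ ∞) (hd : eA (3 / 2) d ≠ ∞) (k : Freq) :
    Summable fun m => bterm c d k m := by
  have h := ne_top_of_le_ne_top (eT_lt_top hc hd k) (tsum_bterm_le c d k)
  have h2 : Summable fun m => (((2 * Real.pi : ℝ) : ℂ) * Complex.I) * bterm c d k m := by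
    refine Summable.of_norm ?_
    have := ENNReal.summable_toReal h
    simpa [toReal_enorm] using this
  refine (summable_mul_left_iff ?_).1 h2
  simp [Real.pi_ne_zero]

lemma Bc_add_left {c c' d : Coef} (hc : eA (3 / 2) c ≠ ∞) (hc' : eA (3 / 2) c' ≠ ∞)
    (hd : eA (3 / 2) d ≠ ∞) : Bc (c + c') d = Bc c d + Bc c' d := by
  funext k
  rw [Pi.add_apply, Bc_eq, Bc_eq, Bc_eq, ← mul_add,
    ← (bterm_summable hc hd k).tsum_add (bterm_summable hc' hd k)]
  congr 1
  refine tsum_congr fun m => ?_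
  unfold bterm
  split_ifs
  · rw [Pi.add_apply]; ring
  · simp

lemma Bc_add_right {c d d' : Coef} (hc : eA (3 / 2) c ≠ ∞) (hd : eA (3 / 2) d ≠ ∞)
    (hd' : eA (3 / 2) d' ≠ ∞) : Bc c (d + d') = Bc c d + Bc c d' := by
  funext k
  rw [Pi.add_apply, Bc_eq, Bc_eq, Bc_eq, ← mul_add,
    ← (bterm_summable hc hd k).tsum_add (bterm_summable hc hd' k)]
  congr 1
  refine tsum_congr fun m => ?_
  unfold bterm
  split_ifs
  · have e : ∀ n : Freq, (d + d') n = d n + d' n := fun n => rfl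
    erw [e]; ring
  · simp

end NS2D

namespace NS2D
open scoped ENNReal NNReal

/-! ### The enstrophy cancellation -/

/-- Euclidean modulus. -/
def rz (n : ℤ × ℤ) : ℝ := Real.sqrt ((n.1 : ℝ) ^ 2 + (n.2 : ℝ) ^ 2)

lemma rz_nonneg (n : ℤ × ℤ) : 0 ≤ rz n := Real.sqrt_nonneg _

lemma rz_sq (n : ℤ × ℤ) : rz n ^ 2 = (n.1 : ℝ) ^ 2 + (n.2 : ℝ) ^ 2 := Real.sq_sqrt (by positivity)

lemma rz_neg (n : ℤ × ℤ) : rz (-n) = rz n := by simp [rz]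

lemma rz_freq (k : Freq) : rz k.1 = Real.sqrt (knormSq k) := rfl

lemma rz_pos (k : Freq) : 0 < rz k.1 :=
  Real.sqrt_pos.2 (lt_of_lt_of_le one_pos (knormSq_ge k))

lemma rz_le_qz (n : ℤ × ℤ) : rz n ≤ qz n := by
  have h := Real.pi_gt_three
  have h2 := rz_nonneg n
  have : qz n = 2 * Real.pi * rz n := rfl
  rw [this]; nlinarith

/-- The symplectic form. -/
def jz (m n : ℤ × ℤ) : ℝ := (m.2 : ℝ) * n.1 - m.1 * n.2

/-- The inner product. -/
def iz (m n : ℤ × ℤ) : ℝ := (m.1 : ℝ) * n.1 + m.2 * n.2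

lemma jz_le (m n : ℤ × ℤ) : |jz m n| ≤ rz m * rz n := by
  rw [rz, rz, ← Real.sqrt_mul (by positivity)]
  apply Real.abs_le_sqrt
  unfold jz; nlinarith [sq_nonneg ((m.1 : ℝ) * n.1 + m.2 * n.2)]

lemma iz_le (m n : ℤ × ℤ) : |iz m n| ≤ rz m * rz n := by
  rw [rz, rz, ← Real.sqrt_mul (by positivity)]
  apply Real.abs_le_sqrt
  unfold iz; nlinarith [sq_nonneg ((m.2 : ℝ) * n.1 - m.1 * n.2)]

/-- Stream function coefficients. -/
def xz (c : Coef) (n : ℤ × ℤ) : ℂ := ext0 c n / (rz n : ℂ)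

lemma norm_xz (c : Coef) (n : ℤ × ℤ) : rz n * ‖xz c n‖ = ‖ext0 c n‖ := by
  by_cases h : n = 0
  · subst h; simp [xz, ext0_zero]
  · have := rz_pos ⟨n, h⟩
    simp only at this
    rw [xz, norm_div, Complex.norm_real, Real.norm_of_nonneg this.le]
    field_simp

/-- The trilinear summand. -/
def fz (c : Coef) (p : (ℤ × ℤ) × (ℤ × ℤ)) : ℂ :=
  xz c p.2 * xz c (p.1 - p.2) * xz c (-p.1) *
    ((jz p.2 (p.1 - p.2) * iz (p.1 - p.2) p.1 * rz p.1 ^ 2 : ℝ) : ℂ)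

/-- First part of the trilinear summand. -/
def f1 (c : Coef) (p : (ℤ × ℤ) × (ℤ × ℤ)) : ℂ :=
  xz c p.2 * xz c (p.1 - p.2) * xz c (-p.1) *
    ((jz p.2 (p.1 - p.2) * rz (p.1 - p.2) ^ 2 * rz p.1 ^ 2 : ℝ) : ℂ)

/-- Second part of the trilinear summand. -/
def f2 (c : Coef) (p : (ℤ × ℤ) × (ℤ × ℤ)) : ℂ :=
  xz c p.2 * xz c (p.1 - p.2) * xz c (-p.1) *
    ((jz p.2 (p.1 - p.2) * iz p.2 (p.1 - p.2) * rz p.1 ^ 2 : ℝ) : ℂ)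

lemma fz_eq (c : Coef) (p) : fz c p = f1 c p + f2 c p := by
  unfold fz f1 f2
  rw [← mul_add, ← Complex.ofReal_add]
  congr 2
  rw [rz_sq (p.1 - p.2)]
  unfold iz
  simp only [Prod.fst_sub, Prod.snd_sub, Int.cast_sub]
  ring

/-- Exchange of the roles of `n` and `-k`. -/
def e1 : (ℤ × ℤ) × (ℤ × ℤ) ≃ (ℤ × ℤ) × (ℤ × ℤ) where
  toFun p := (p.2 - p.1, p.2)
  invFun p := (p.2 - p.1, p.2)
  left_inv p := by simp
  right_inv p := by simp

/-- Exchange of the roles of `m` and `n`. -/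
def e2 : (ℤ × ℤ) × (ℤ × ℤ) ≃ (ℤ × ℤ) × (ℤ × ℤ) where
  toFun p := (p.1, p.1 - p.2)
  invFun p := (p.1, p.1 - p.2)
  left_inv p := by simp
  right_inv p := by simp

lemma f1_anti (c : Coef) (p) : f1 c (e1 p) = - f1 c p := by
  have h1 : (e1 p).1 - (e1 p).2 = - p.1 := by simp [e1]
  have h2 : -(e1 p).1 = p.1 - p.2 := by simp [e1]
  have h3 : rz (e1 p).1 = rz (p.1 - p.2) := by rw [← rz_neg, h2]
  have h4 : (e1 p).2 = p.2 := rfl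
  have h5 : jz p.2 (-p.1) = - jz p.2 (p.1 - p.2) := by
    simp [jz]; ring
  unfold f1
  rw [h1, h2, h3, h4, h5, rz_neg]
  push_cast
  ring

lemma f2_anti (c : Coef) (p) : f2 c (e2 p) = - f2 c p := by
  have h1 : (e2 p).1 - (e2 p).2 = p.2 := by simp [e2]
  have h2 : (e2 p).1 = p.1 := by simp [e2]
  have h4 : (e2 p).2 = p.1 - p.2 := rfl
  have h5 : jz (p.1 - p.2) p.2 = - jz p.2 (p.1 - p.2) := by
    simp [jz]; ring
  have h6 : iz (p.1 - p.2) p.2 = iz p.2 (p.1 - p.2) := by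
    simp [iz]; ring
  unfold f2
  rw [h1, h2, h4, h5, h6]
  push_cast
  ring

lemma tsum_anti (F : (ℤ × ℤ) × (ℤ × ℤ) → ℂ) (e : (ℤ × ℤ) × (ℤ × ℤ) ≃ (ℤ × ℤ) × (ℤ × ℤ))
    (h : ∀ p, F (e p) = - F p) : ∑' p, F p = 0 := by
  have h1 := e.tsum_eq F
  simp only [h, tsum_neg] at h1
  exact self_eq_neg.1 h1.symm

/-- Majorant of the trilinear summand. -/
def gz (c : Coef) (p : (ℤ × ℤ) × (ℤ × ℤ)) : ℝ :=
  ‖ext0 c p.2‖ * (qz (p.1 - p.2) * ‖ext0 c (p.1 - p.2)‖) * (qz p.1 ^ 2 * ‖ext0 c (-p.1)‖)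

lemma gz_nonneg (c : Coef) (p) : 0 ≤ gz c p := by
  unfold gz
  have := qz_nonneg (p.1 - p.2)
  positivity

lemma enorm_ext0 (c : Coef) (n : ℤ × ℤ) : ‖ext0 c n‖ₑ = eC c n := by
  unfold eC ext0
  split_ifs <;> simp

lemma ext0_neg {c : Coef} (hc : IsReal c) (k : Freq) :
    ext0 c (-k.1) = - (starRingEnd ℂ) (c k) := by
  rw [← hc k]; exact ext0_val c (fneg k)

lemma gz_summable {c : Coef} (hr : IsReal c) (hc : eA 2 c ≠ ∞) : Summable (gz c) := by
  have h : ∑' p, ENNReal.ofReal (gz c p) ≠ ∞ := by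
    have e : ∀ p : (ℤ × ℤ) × (ℤ × ℤ), ENNReal.ofReal (gz c p) =
        (ENNReal.ofReal (qz p.1 ^ 2) * eC c (-p.1)) *
        (eC c p.2 * (ENNReal.ofReal (qz (p.1 - p.2)) * eC c (p.1 - p.2))) := by
      intro p
      have := qz_nonneg (p.1 - p.2)
      unfold gz
      rw [ENNReal.ofReal_mul (by positivity), ENNReal.ofReal_mul (by positivity),
        ENNReal.ofReal_mul (by positivity), ENNReal.ofReal_mul (by positivity)]
      simp only [ofReal_norm, enorm_ext0]
      ring
    simp_rw [e]
    rw [ENNReal.tsum_prod (f := fun k m : ℤ × ℤ => (ENNReal.ofReal (qz k ^ 2) * eC c (-k)) *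
        (eC c m * (ENNReal.ofReal (qz (k - m)) * eC c (k - m))))]
    simp_rw [ENNReal.tsum_mul_left]
    change ∑' k, (ENNReal.ofReal (qz k ^ 2) * eC c (-k)) * eT c c k ≠ ∞
    rw [← tsum_freq _ (by simp [eC, ext0_zero])]
    have b1 : ∑' k : Freq, eT c c k.1 ^ 2 ≠ ∞ := by
      have := conv_est' (s := 1) le_rfl c c
      simp only [sub_self, Real.rpow_zero, ENNReal.ofReal_one, one_mul] at this
      refine ne_top_of_le_ne_top ?_ this
      have h1 : eA 1 c ≠ ∞ := ne_top_of_le_ne_top hc (eA_mono (by norm_num) c)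
      have h2 : eA (3 / 2) c ≠ ∞ := ne_top_of_le_ne_top hc (eA_mono (by norm_num) c)
      have := kb_ne_top 1
      finiteness
    refine ne_top_of_le_ne_top (ENNReal.add_ne_top.2 ⟨hc, b1⟩) ?_
    unfold eA
    rw [← ENNReal.tsum_add]
    refine ENNReal.tsum_le_tsum fun k => (mul_le_sq_add _ _).trans (le_of_eq ?_)
    congr 1
    rw [mul_pow, ← enorm_ext0, ext0_neg hr, enorm_neg, qz_sq,
      ← ENNReal.ofReal_pow (lam_pos k).le]
    have : ‖(starRingEnd ℂ) (c k)‖ₑ = ‖c k‖ₑ := by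
      rw [← ofReal_norm, ← ofReal_norm, Complex.norm_conj]
    rw [this]
    norm_num
  have := ENNReal.summable_toReal h
  refine this.congr fun p => ?_
  rw [ENNReal.toReal_ofReal (gz_nonneg c p)]

lemma fz_le (c : Coef) (p) : ‖fz c p‖ ≤ gz c p := by
  unfold fz
  simp only [norm_mul, Complex.norm_real, Real.norm_eq_abs, abs_mul]
  rw [abs_of_nonneg (sq_nonneg (rz p.1))]
  have j := jz_le p.2 (p.1 - p.2)
  have i := iz_le (p.1 - p.2) p.1
  have n1 := norm_xz c p.2
  have n2 := norm_xz c (p.1 - p.2)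
  have n3 := norm_xz c (-p.1)
  rw [rz_neg] at n3
  have r1 := rz_nonneg p.2
  have r2 := rz_nonneg (p.1 - p.2)
  have r3 := rz_nonneg p.1
  calc ‖xz c p.2‖ * ‖xz c (p.1 - p.2)‖ * ‖xz c (-p.1)‖ *
        (|jz p.2 (p.1 - p.2)| * |iz (p.1 - p.2) p.1| * rz p.1 ^ 2)
      ≤ ‖xz c p.2‖ * ‖xz c (p.1 - p.2)‖ * ‖xz c (-p.1)‖ *
        ((rz p.2 * rz (p.1 - p.2)) * (rz (p.1 - p.2) * rz p.1) * rz p.1 ^ 2) := by gcongr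
    _ = (rz p.2 * ‖xz c p.2‖) * (rz (p.1 - p.2) * (rz (p.1 - p.2) * ‖xz c (p.1 - p.2)‖)) *
        (rz p.1 ^ 2 * (rz p.1 * ‖xz c (-p.1)‖)) := by ring
    _ = ‖ext0 c p.2‖ * (rz (p.1 - p.2) * ‖ext0 c (p.1 - p.2)‖) * (rz p.1 ^ 2 * ‖ext0 c (-p.1)‖) := by
        rw [n1, n2, n3]
    _ ≤ _ := by
        unfold gz
        have := qz_nonneg (p.1 - p.2)
        gcongr <;> exact rz_le_qz _

lemma f1_le (c : Coef) (p) : ‖f1 c p‖ ≤ gz c (e1 p) := by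
  unfold f1
  simp only [norm_mul, Complex.norm_real, Real.norm_eq_abs, abs_mul]
  rw [abs_of_nonneg (sq_nonneg (rz p.1)), abs_of_nonneg (sq_nonneg (rz (p.1 - p.2)))]
  have j := jz_le p.2 (p.1 - p.2)
  have n1 := norm_xz c p.2
  have n2 := norm_xz c (p.1 - p.2)
  have n3 := norm_xz c (-p.1)
  rw [rz_neg] at n3
  have r1 := rz_nonneg p.2
  have r2 := rz_nonneg (p.1 - p.2)
  have r3 := rz_nonneg p.1
  have h1 : (e1 p).1 - (e1 p).2 = - p.1 := by simp [e1]
  have h2 : -(e1 p).1 = p.1 - p.2 := by simp [e1]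
  have h4 : (e1 p).2 = p.2 := rfl
  have h5 : rz p.1 ≤ qz (-p.1) := by rw [← rz_neg]; exact rz_le_qz _
  have h6 : rz (p.1 - p.2) ≤ qz (e1 p).1 := by rw [← h2, rz_neg]; exact rz_le_qz _
  calc ‖xz c p.2‖ * ‖xz c (p.1 - p.2)‖ * ‖xz c (-p.1)‖ *
        (|jz p.2 (p.1 - p.2)| * rz (p.1 - p.2) ^ 2 * rz p.1 ^ 2)
      ≤ ‖xz c p.2‖ * ‖xz c (p.1 - p.2)‖ * ‖xz c (-p.1)‖ *
        ((rz p.2 * rz (p.1 - p.2)) * rz (p.1 - p.2) ^ 2 * rz p.1 ^ 2) := by gcongr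
    _ = (rz p.2 * ‖xz c p.2‖) * (rz p.1 * (rz p.1 * ‖xz c (-p.1)‖)) *
        (rz (p.1 - p.2) ^ 2 * (rz (p.1 - p.2) * ‖xz c (p.1 - p.2)‖)) := by ring
    _ = ‖ext0 c p.2‖ * (rz p.1 * ‖ext0 c (-p.1)‖) *
        (rz (p.1 - p.2) ^ 2 * ‖ext0 c (p.1 - p.2)‖) := by
        rw [n1, n2, n3]
    _ ≤ _ := by
        unfold gz
        rw [h1, h2, h4]
        have := qz_nonneg (-p.1)
        gcongr

lemma fz_summable {c : Coef} (hr : IsReal c) (hc : eA 2 c ≠ ∞) : Summable (fz c) :=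
  Summable.of_norm_bounded (gz_summable hr hc) (fz_le c)

lemma tsum_fz {c : Coef} (hr : IsReal c) (hc : eA 2 c ≠ ∞) : ∑' p, fz c p = 0 := by
  have s := fz_summable hr hc
  have s1 : Summable (f1 c) :=
    Summable.of_norm_bounded (e1.summable_iff.2 (gz_summable hr hc)) (f1_le c)
  have s2 : Summable (f2 c) := (s.sub s1).congr fun p => by rw [fz_eq]; ring
  simp_rw [fz_eq]
  rw [s1.tsum_add s2, tsum_anti _ e1 (f1_anti c), tsum_anti _ e2 (f2_anti c), add_zero]

lemma term_eq {c : Coef} (hr : IsReal c) (k m : Freq) :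
    ((lam k : ℝ) : ℂ) * ((((2 * Real.pi : ℝ) : ℂ) * Complex.I) * bterm c c k m *
      (starRingEnd ℂ) (c k)) =
    (-(((2 * Real.pi : ℝ) : ℂ) * Complex.I) * ((4 * Real.pi ^ 2 : ℝ) : ℂ)) * fz c (k.1, m.1) := by
  have hk := rz_pos k
  have hm := rz_pos m
  have e3 : (starRingEnd ℂ) (c k) = - ((rz k.1 : ℂ) * xz c (-k.1)) := by
    have := ext0_neg hr k
    rw [xz, this, rz_neg]
    have : (rz k.1 : ℂ) ≠ 0 := by exact_mod_cast hk.ne'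
    field_simp
  have e4 : lam k = 4 * Real.pi ^ 2 * rz k.1 ^ 2 := by
    rw [rz_sq]; rfl
  unfold bterm
  split_ifs with h
  · set n : Freq := ⟨k.1 - m.1, h⟩ with hn
    have hn' : k.1 - m.1 = n.1 := rfl
    have hnp := rz_pos n
    have d1 : dotR (evec m) (fvec n) = jz m.1 n.1 / rz m.1 := by
      rw [rz_freq]; simp only [dotR, evec, fvec, jz]; ring
    have d2 : dotR (evec n) (evec k) = iz n.1 k.1 / (rz n.1 * rz k.1) := by
      rw [rz_freq, rz_freq]; simp only [dotR, evec, iz]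
      rw [rz_freq] at hk hnp
      field_simp
      ring
    unfold fz
    simp only
    rw [e3, e4, d1, d2, hn', xz.eq_1 c m.1, xz.eq_1 c n.1, ext0_val, ext0_val]
    have h1 : (rz k.1 : ℂ) ≠ 0 := by exact_mod_cast hk.ne'
    have h2 : (rz m.1 : ℂ) ≠ 0 := by exact_mod_cast hm.ne'
    have h3 : (rz n.1 : ℂ) ≠ 0 := by exact_mod_cast hnp.ne'
    push_cast
    field_simp
  · push Not at h
    unfold fz
    simp only
    rw [h]
    simp [xz, ext0_zero]

/-- Orthogonality `⟨B[u,u], A u⟩ = 0` on the two-dimensional torus. -/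
theorem enstrophy {c : Coef} (hr : IsReal c) (hc : eA 2 c ≠ ∞) :
    ∑' k, ((lam k : ℝ) : ℂ) * (Bc c c k * (starRingEnd ℂ) (c k)) = 0 := by
  have s := fz_summable hr hc
  have h : ∀ k, ((lam k : ℝ) : ℂ) * (Bc c c k * (starRingEnd ℂ) (c k)) =
      (-(((2 * Real.pi : ℝ) : ℂ) * Complex.I) * ((4 * Real.pi ^ 2 : ℝ) : ℂ)) *
        ∑' m, fz c (k.1, m) := by
    intro k
    rw [Bc_eq, ← tsum_mul_left, ← tsum_mul_right, ← tsum_mul_left,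
      ← tsum_freq (fun m => fz c (k.1, m)) (by simp [fz, xz, ext0_zero]), ← tsum_mul_left]
    exact tsum_congr fun m => term_eq hr k m
  simp_rw [h]
  rw [tsum_mul_left, tsum_freq (fun k => ∑' m, fz c (k, m)) (by simp [fz, xz, ext0_zero]),
    ← s.tsum_prod, tsum_fz hr hc, mul_zero]

end NS2D

namespace NS2D
open scoped ENNReal NNReal

/-! ### Parabolic energy estimates -/

lemma scalar_energy {t μ : ℝ} (ht : 0 ≤ t) {z g : ℝ → ℂ} {φ : ℝ → ℝ}
    (hz : ContinuousOn z (Icc 0 t))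
    (hd : ∀ x ∈ Ioo 0 t, HasDerivAt z (g x - (μ : ℂ) * z x) x)
    (hφ : IntegrableOn φ (Ioc 0 t))
    (hg : ∀ x ∈ Ioo 0 t, 2 * (g x * (starRingEnd ℂ) (z x)).re ≤ φ x) :
    ‖z t‖ ^ 2 + 2 * μ * ∫ x in Ioc 0 t, ‖z x‖ ^ 2 ≤ ‖z 0‖ ^ 2 + ∫ x in Ioc 0 t, φ x := by
  have hz2 : ContinuousOn (fun x => ‖z x‖ ^ 2) (Icc 0 t) := hz.norm.pow 2
  have iz2 : IntegrableOn (fun x => ‖z x‖ ^ 2) (Ioc 0 t) :=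
    (hz2.integrableOn_Icc).mono_set Ioc_subset_Icc_self
  have key := intervalIntegral.sub_le_integral_of_hasDeriv_right_of_le
    (g := fun x => ‖z x‖ ^ 2) (g' := fun x => 2 * inner ℝ (z x) (g x - (μ : ℂ) * z x))
    (φ := fun x => φ x - 2 * μ * ‖z x‖ ^ 2) ht hz2
    (fun x hx => ((hd x hx).norm_sq).hasDerivWithinAt)
    (by
      rw [integrableOn_Icc_iff_integrableOn_Ioc]
      exact hφ.sub (iz2.const_mul _))
    (fun x hx => by
      have h1 := hg x hx
      have h2 : inner ℝ (z x) (g x - (μ : ℂ) * z x) =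
          (g x * (starRingEnd ℂ) (z x)).re - μ * ‖z x‖ ^ 2 := by
        rw [Complex.inner, ← Complex.normSq_eq_norm_sq, Complex.normSq_apply]
        simp [Complex.mul_re, Complex.sub_re, Complex.sub_im]
        ring
      rw [h2]; linarith)
  rw [intervalIntegral.integral_of_le ht, integral_sub hφ (iz2.const_mul _),
    integral_const_mul] at key
  linarith

lemma aesm_of_deriv {t μ : ℝ} {z g : ℝ → ℂ}
    (hz : ContinuousOn z (Icc 0 t))
    (hd : ∀ x ∈ Ioo 0 t, HasDerivAt z (g x - (μ : ℂ) * z x) x) :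
    AEStronglyMeasurable g (volume.restrict (Ioc 0 t)) := by
  have h1 : AEStronglyMeasurable z (volume.restrict (Ioc 0 t)) :=
    (hz.mono Ioc_subset_Icc_self).aestronglyMeasurable measurableSet_Ioc
  have h2 : AEStronglyMeasurable (fun x => deriv z x + (μ : ℂ) * z x) (volume.restrict (Ioc 0 t)) :=
    (stronglyMeasurable_deriv z).aestronglyMeasurable.add (h1.const_mul _)
  refine h2.congr ?_
  rw [restrict_Ioo_eq_restrict_Ioc.symm]
  filter_upwards [ae_restrict_mem measurableSet_Ioo] with x hx
  rw [(hd x hx).deriv]; ring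

lemma scalar_enorm {t μ : ℝ} (ht : 0 ≤ t) (hμ : 0 < μ) {z g : ℝ → ℂ}
    (hz : ContinuousOn z (Icc 0 t))
    (hd : ∀ x ∈ Ioo 0 t, HasDerivAt z (g x - (μ : ℂ) * z x) x) :
    ‖z t‖ₑ ^ 2 + ENNReal.ofReal μ * ∫⁻ x in Ioc 0 t, ‖z x‖ₑ ^ 2 ≤
      ‖z 0‖ₑ ^ 2 + ENNReal.ofReal μ⁻¹ * ∫⁻ x in Ioc 0 t, ‖g x‖ₑ ^ 2 := by
  have hgm := aesm_of_deriv hz hd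
  by_cases htop : ∫⁻ x in Ioc 0 t, ‖g x‖ₑ ^ 2 = ∞
  · rw [htop, ENNReal.mul_top (by simpa using hμ)]; simp
  have eq : ∀ w : ℂ, ‖w‖ₑ ^ 2 = ENNReal.ofReal (‖w‖ ^ 2) := fun w => by
    rw [ENNReal.ofReal_pow (norm_nonneg _), ofReal_norm]
  have ig : IntegrableOn (fun x => ‖g x‖ ^ 2) (Ioc 0 t) := by
    refine ⟨hgm.norm.pow 2, ?_⟩
    rw [hasFiniteIntegral_iff_ofReal (Filter.Eventually.of_forall fun x => by positivity)]
    simp_rw [← eq]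
    exact lt_top_iff_ne_top.2 htop
  have iz2 : IntegrableOn (fun x => ‖z x‖ ^ 2) (Ioc 0 t) :=
    ((hz.norm.pow 2).integrableOn_Icc).mono_set Ioc_subset_Icc_self
  have key := scalar_energy (φ := fun x => μ * ‖z x‖ ^ 2 + μ⁻¹ * ‖g x‖ ^ 2) ht hz hd
    (Integrable.fun_add (f := fun x => μ * ‖z x‖ ^ 2) (g := fun x => μ⁻¹ * ‖g x‖ ^ 2)
      (iz2.const_mul _) (ig.const_mul _)) (fun x _ => by
      have h1 : (g x * (starRingEnd ℂ) (z x)).re ≤ ‖g x‖ * ‖z x‖ := by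
        refine (Complex.re_le_norm _).trans ?_
        rw [norm_mul, Complex.norm_conj]
      have h2 : 0 ≤ μ⁻¹ * (‖g x‖ - μ * ‖z x‖) ^ 2 := by positivity
      have h3 : μ⁻¹ * (‖g x‖ - μ * ‖z x‖) ^ 2 =
        μ * ‖z x‖ ^ 2 + μ⁻¹ * ‖g x‖ ^ 2 - 2 * (‖g x‖ * ‖z x‖) := by field_simp; ring
      linarith)
  rw [integral_add (iz2.const_mul _) (ig.const_mul _), integral_const_mul,
    integral_const_mul] at key
  simp_rw [eq]
  rw [← ofReal_integral_eq_lintegral_ofReal ig (Filter.Eventually.of_forall fun x => by positivity),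
    ← ofReal_integral_eq_lintegral_ofReal iz2 (Filter.Eventually.of_forall fun x => by positivity),
    ← ENNReal.ofReal_mul hμ.le, ← ENNReal.ofReal_mul (by positivity)]
  have p1 : 0 ≤ ∫ x in Ioc 0 t, ‖z x‖ ^ 2 := integral_nonneg fun x => by positivity
  have p2 : 0 ≤ ∫ x in Ioc 0 t, ‖g x‖ ^ 2 := integral_nonneg fun x => by positivity
  rw [← ENNReal.ofReal_add (by positivity) (by positivity),
    ← ENNReal.ofReal_add (by positivity) (by positivity)]
  apply ENNReal.ofReal_le_ofReal
  linarith

/-- `y` solves `y' = g - ν λ y` coefficientwise on `[0,T]`. -/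
structure HeatEq (ν T : ℝ) (y g : ℝ → Coef) : Prop where
  cont : ∀ k, ContinuousOn (fun t => y t k) (Icc 0 T)
  deriv : ∀ k, ∀ t ∈ Ioc 0 T,
    HasDerivAt (fun s => y s k) (g t k - ((ν * lam k : ℝ) : ℂ) * y t k) t

lemma HeatEq.aem_y {ν T : ℝ} {y g : ℝ → Coef} (h : HeatEq ν T y g) {t : ℝ} (ht : t ≤ T) (k : Freq) :
    AEStronglyMeasurable (fun τ => y τ k) (volume.restrict (Ioc 0 t)) :=
  ((h.cont k).mono (Ioc_subset_Icc_self.trans (Icc_subset_Icc le_rfl ht))).aestronglyMeasurable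
    measurableSet_Ioc

lemma HeatEq.aem_g {ν T : ℝ} {y g : ℝ → Coef} (h : HeatEq ν T y g) {t : ℝ} (ht : t ≤ T) (k : Freq) :
    AEStronglyMeasurable (fun τ => g τ k) (volume.restrict (Ioc 0 t)) :=
  aesm_of_deriv (μ := ν * lam k) ((h.cont k).mono (Icc_subset_Icc le_rfl ht))
    fun x hx => h.deriv k x ⟨hx.1, hx.2.le.trans ht⟩

lemma HeatEq.lint {ν T : ℝ} {y g : ℝ → Coef} (h : HeatEq ν T y g) {t : ℝ} (ht : t ≤ T) (s : ℝ) :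
    ∫⁻ τ in Ioc 0 t, eA s (y τ) =
      ∑' k, ENNReal.ofReal (lam k ^ s) * ∫⁻ τ in Ioc 0 t, ‖y τ k‖ₑ ^ 2 := by
  unfold eA
  rw [lintegral_tsum fun k => (((h.aem_y ht k).enorm).pow_const 2).const_mul _]
  exact tsum_congr fun k => lintegral_const_mul'' _ (((h.aem_y ht k).enorm).pow_const 2)

lemma HeatEq.lint_g {ν T : ℝ} {y g : ℝ → Coef} (h : HeatEq ν T y g) {t : ℝ} (ht : t ≤ T) (s : ℝ) :
    ∫⁻ τ in Ioc 0 t, eA s (g τ) =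
      ∑' k, ENNReal.ofReal (lam k ^ s) * ∫⁻ τ in Ioc 0 t, ‖g τ k‖ₑ ^ 2 := by
  unfold eA
  rw [lintegral_tsum fun k => (((h.aem_g ht k).enorm).pow_const 2).const_mul _]
  exact tsum_congr fun k => lintegral_const_mul'' _ (((h.aem_g ht k).enorm).pow_const 2)

/-- Parabolic energy estimate. -/
theorem HeatEq.energy {ν T : ℝ} (hν : 0 < ν) {y g : ℝ → Coef} (h : HeatEq ν T y g) (s : ℝ)
    {t : ℝ} (ht : t ∈ Icc 0 T) :
    eA s (y t) + ENNReal.ofReal ν * ∫⁻ τ in Ioc 0 t, eA (s + 1) (y τ) ≤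
      eA s (y 0) + ENNReal.ofReal ν⁻¹ * ∫⁻ τ in Ioc 0 t, eA (s - 1) (g τ) := by
  rw [h.lint ht.2, h.lint_g ht.2, ← ENNReal.tsum_mul_left, ← ENNReal.tsum_mul_left]
  unfold eA
  rw [← ENNReal.tsum_add, ← ENNReal.tsum_add]
  refine ENNReal.tsum_le_tsum fun k => ?_
  have hl := lam_pos k
  have key := scalar_enorm ht.1 (mul_pos hν hl) ((h.cont k).mono (Icc_subset_Icc le_rfl ht.2))
    fun x hx => h.deriv k x ⟨hx.1, hx.2.le.trans ht.2⟩
  have key2 := mul_le_mul_right key (ENNReal.ofReal (lam k ^ s))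
  have a1 : ENNReal.ofReal (lam k ^ (s + 1)) = ENNReal.ofReal (lam k ^ s) * ENNReal.ofReal (lam k) := by
    rw [← ENNReal.ofReal_mul (by positivity), Real.rpow_add_one hl.ne']
  have a2 : ENNReal.ofReal (lam k ^ (s - 1)) = ENNReal.ofReal (lam k ^ s) * ENNReal.ofReal (lam k)⁻¹ := by
    rw [← ENNReal.ofReal_mul (by positivity), Real.rpow_sub_one hl.ne', div_eq_mul_inv]
  rw [mul_inv, ENNReal.ofReal_mul hν.le, ENNReal.ofReal_mul (by positivity), mul_add, mul_add] at key2
  rw [a1, a2]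
  convert key2 using 2 <;> ring

end NS2D

namespace NS2D
open scoped ENNReal NNReal

/-! ### Continuity and the enstrophy balance -/

lemma eA_lt_of_hN {α ε : ℝ} (hε : 0 < ε) {c : Coef} (hc : eA α c ≠ ∞) (h : hN α c < ε) :
    eA α c ≤ ENNReal.ofReal (ε ^ 2) := by
  rw [eA_of_fin (fin_of_eA hc)]
  apply ENNReal.ofReal_le_ofReal
  have := Real.sqrt_lt' hε |>.1 h
  exact this.le

lemma eA_sub_ne_top {α : ℝ} {c d : Coef} (hc : eA α c ≠ ∞) (hd : eA α d ≠ ∞) :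
    eA α (c - d) ≠ ∞ := by
  refine ne_top_of_le_ne_top ?_ (eA_sub_le α c d)
  finiteness

lemma enorm_le_eA {α : ℝ} (hα : 0 ≤ α) (c : Coef) (k : Freq) : ‖c k‖ₑ ^ 2 ≤ eA α c := by
  refine le_trans ?_ (ENNReal.le_tsum k)
  have : 1 ≤ ENNReal.ofReal (lam k ^ α) := by
    rw [ENNReal.one_le_ofReal]; exact Real.one_le_rpow (lam_ge k) hα
  exact le_mul_of_one_le_left (zero_le) this

lemma cont_coef {α T : ℝ} (hα : 0 ≤ α) {u : ℝ → Coef} (hu : ContH α T u)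
    (hf : ∀ t ∈ Icc 0 T, eA α (u t) ≠ ∞) (k : Freq) :
    ContinuousOn (fun t => u t k) (Icc 0 T) := by
  rw [Metric.continuousOn_iff]
  intro t ht ε hε
  obtain ⟨δ, hδ, h⟩ := hu t ht (ε / 2) (by positivity)
  refine ⟨δ, hδ, fun s hs hst => ?_⟩
  have h1 := eA_lt_of_hN (by positivity) (eA_sub_ne_top (hf s hs) (hf t ht)) (h s hs hst)
  have h2 := (enorm_le_eA hα (u s - u t) k).trans h1
  rw [dist_eq_norm]
  rw [← ofReal_norm, ← ENNReal.ofReal_pow (norm_nonneg _),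
    ENNReal.ofReal_le_ofReal_iff (by positivity)] at h2
  have h3 := abs_le_of_sq_le_sq' h2 (by positivity)
  have : ‖u s k - u t k‖ ≤ ε / 2 := h3.2
  linarith

lemma bdd_of_cont {α T : ℝ} {u : ℝ → Coef} (hu : ContH α T u)
    (hf : ∀ t ∈ Icc 0 T, eA α (u t) ≠ ∞) :
    ∃ M : ℝ≥0∞, M ≠ ∞ ∧ ∀ t ∈ Icc 0 T, eA α (u t) ≤ M := by
  refine isCompact_Icc.induction_on (p := fun S => ∃ M : ℝ≥0∞, M ≠ ∞ ∧ ∀ t ∈ S, eA α (u t) ≤ M)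
    ⟨0, by simp, by simp⟩ ?_ ?_ ?_
  · rintro S S' hS ⟨M, hM, h⟩
    exact ⟨M, hM, fun t ht => h t (hS ht)⟩
  · rintro S S' ⟨M, hM, h⟩ ⟨M', hM', h'⟩
    refine ⟨M + M', by finiteness, ?_⟩
    rintro t (ht | ht)
    · exact (h t ht).trans le_self_add
    · exact (h' t ht).trans le_add_self
  · intro t ht
    obtain ⟨δ, hδ, h⟩ := hu t ht 1 one_pos
    refine ⟨Metric.ball t δ ∩ Icc 0 T, ?_, 4 * (1 + eA α (u t)), ?_, ?_⟩
    · rw [inter_comm]; exact inter_mem_nhdsWithin _ (Metric.ball_mem_nhds t hδ)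
    · have := hf t ht
      finiteness
    · rintro s ⟨hs1, hs2⟩
      have h1 := eA_lt_of_hN one_pos (eA_sub_ne_top (hf s hs2) (hf t ht)) (h s hs2 hs1)
      have h2 := eA_add_le α (u s - u t) (u t)
      rw [sub_add_cancel] at h2
      refine h2.trans ?_
      gcongr
      simpa using h1

section NS

variable {ν T : ℝ} {f θ : Coef} {u : ℝ → Coef}

lemma IsNSSol.fin1 (h : IsNSSol ν f T θ u) (hθ : eA 1 θ ≠ ∞) {t : ℝ} (ht : t ∈ Icc 0 T) :
    eA 1 (u t) ≠ ∞ := by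
  rcases ht.1.eq_or_lt with h0 | h0
  · rw [← h0, h.init]; exact hθ
  · exact ne_top_of_le_ne_top (eA_ne_top (h.memL2H2.1 t ⟨h0, ht.2⟩).2) (eA_mono (by norm_num) _)

lemma IsNSSol.heat (h : IsNSSol ν f T θ u) (hθ : eA 1 θ ≠ ∞) :
    HeatEq ν T u (fun t => f - Bc (u t) (u t)) where
  cont k := cont_coef zero_le_one h.contH1 (fun t ht => h.fin1 hθ ht) k
  deriv k t ht := by
    have := h.deriv k t ht
    convert this using 1
    rw [Pi.sub_apply]; ring

lemma memL2_lint {α : ℝ} {u : ℝ → Coef} (h : MemL2H α T u) :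
    ∫⁻ τ in Ioc 0 T, eA α (u τ) ≠ ∞ := by
  have e : ∫⁻ τ in Ioc 0 T, eA α (u τ) = ∫⁻ τ in Ioc 0 T, ENNReal.ofReal (hSq α (u τ)) :=
    setLIntegral_congr_fun measurableSet_Ioc fun t ht => eA_of_fin (h.1 t ht).2
  rw [e]
  have := h.2.2
  rw [hasFiniteIntegral_iff_ofReal (Filter.Eventually.of_forall fun x => hSq_nonneg _ _)] at this
  exact this.ne

lemma eA_zero_B (c : Coef) : eA 0 (Bc c c) ≤ 2 * kb 1 * (eA 1 c * eA 2 c) := by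
  have h := eA_Bc (s := 1) le_rfl c c
  rw [sub_self] at h
  refine h.trans ?_
  calc kb 1 * (eA 1 c * eA (3 / 2) c + eA (3 / 2) c * eA 1 c)
      ≤ kb 1 * (eA 1 c * eA 2 c + eA 2 c * eA 1 c) := by
        gcongr <;> exact eA_mono (by norm_num) _
    _ = _ := by ring

theorem IsNSSol.enst (h : IsNSSol ν f T θ u) (hν : 0 < ν) (hθ : eA 1 θ ≠ ∞) (hf : eA 0 f ≠ ∞)
    {t : ℝ} (ht : t ∈ Icc 0 T) :
    eA 1 (u t) + ENNReal.ofReal ν * ∫⁻ τ in Ioc 0 t, eA 2 (u τ) ≤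
      eA 1 θ + ENNReal.ofReal (ν⁻¹ * t) * eA 0 f := by
  have hh := h.heat hθ
  have hsub : Ioc 0 t ⊆ Ioc 0 T := Ioc_subset_Ioc le_rfl ht.2
  obtain ⟨M, hM, hbd⟩ := bdd_of_cont h.contH1 fun t ht => h.fin1 hθ ht
  -- the nonlinear term
  set b : Freq → ℝ → ℂ := fun k x => Bc (u x) (u x) k with hb
  have bm : ∀ k, AEStronglyMeasurable (b k) (volume.restrict (Ioc 0 t)) := fun k => by
    have h1 := hh.aem_g ht.2 k
    have h2 : AEStronglyMeasurable (fun x => f k - (f - Bc (u x) (u x)) k)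
        (volume.restrict (Ioc 0 t)) := aestronglyMeasurable_const.sub h1
    refine h2.congr (Filter.Eventually.of_forall fun x => ?_)
    simp [hb]
  set H : Freq → ℝ → ℂ := fun k x => ((lam k : ℝ) : ℂ) * (b k x * (starRingEnd ℂ) (u x k)) with hH
  have Hm : ∀ k, AEStronglyMeasurable (H k) (volume.restrict (Ioc 0 t)) := fun k =>
    ((bm k).mul (Complex.continuous_conj.comp_aestronglyMeasurable (hh.aem_y ht.2 k))).const_mul _
  have Hsum : ∑' k, ∫⁻ x in Ioc 0 t, ‖H k x‖ₑ ≠ ∞ := by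
    rw [← lintegral_tsum fun k => (Hm k).enorm]
    have le1 : ∀ x ∈ Ioc 0 t, ∑' k, ‖H k x‖ₑ ≤ (2 * kb 1 * M + 1) * eA 2 (u x) := by
      intro x hx
      have hx' : x ∈ Icc 0 T := ⟨hx.1.le, hx.2.trans ht.2⟩
      calc ∑' k, ‖H k x‖ₑ ≤ ∑' k, (ENNReal.ofReal (lam k ^ (0 : ℝ)) * ‖Bc (u x) (u x) k‖ₑ ^ 2 +
            ENNReal.ofReal (lam k ^ (2 : ℝ)) * ‖u x k‖ₑ ^ 2) := by
            refine ENNReal.tsum_le_tsum fun k => ?_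
            have hl := (lam_pos k).le
            have c1 : ‖(starRingEnd ℂ) (u x k)‖ₑ = ‖u x k‖ₑ := by
              rw [← ofReal_norm, ← ofReal_norm, Complex.norm_conj]
            have c2 : ‖((lam k : ℝ) : ℂ)‖ₑ = ENNReal.ofReal (lam k) := by
              rw [← ofReal_norm, Complex.norm_real, Real.norm_of_nonneg hl]
            simp only [hH, hb, enorm_mul, c1, c2]
            calc ENNReal.ofReal (lam k) * (‖Bc (u x) (u x) k‖ₑ * ‖u x k‖ₑ)
                = ‖Bc (u x) (u x) k‖ₑ * (ENNReal.ofReal (lam k) * ‖u x k‖ₑ) := by ring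
              _ ≤ _ := mul_le_sq_add _ _
              _ = _ := by
                rw [mul_pow, ← ENNReal.ofReal_pow hl]
                norm_num
        _ = eA 0 (Bc (u x) (u x)) + eA 2 (u x) := ENNReal.tsum_add
        _ ≤ 2 * kb 1 * (M * eA 2 (u x)) + eA 2 (u x) := by
            gcongr
            refine (eA_zero_B _).trans ?_
            gcongr
            exact hbd x hx'
        _ = _ := by ring
    refine ne_top_of_le_ne_top ?_ (setLIntegral_mono' measurableSet_Ioc le1)
    have := kb_ne_top 1
    rw [lintegral_const_mul' _ _ (by finiteness)]
    have h3 : ∫⁻ x in Ioc 0 t, eA 2 (u x) ≠ ∞ :=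
      ne_top_of_le_ne_top (memL2_lint h.memL2H2) (lintegral_mono_set hsub)
    finiteness
  have Hint : ∀ k, Integrable (H k) (volume.restrict (Ioc 0 t)) := fun k =>
    ⟨Hm k, lt_top_iff_ne_top.2 (ne_top_of_le_ne_top Hsum (ENNReal.le_tsum k))⟩
  have HS := hasSum_integral_of_summable_integral_norm Hint (by
    have := ENNReal.summable_toReal Hsum
    refine this.congr fun k => ?_
    rw [integral_norm_eq_lintegral_enorm (Hm k)])
  have H0 : ∫ x in Ioc 0 t, ∑' k, H k x = 0 := by
    rw [setIntegral_congr_fun (g := fun _ => (0 : ℂ)) measurableSet_Ioc]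
    · simp
    · intro x hx
      exact enstrophy (h.real x ⟨hx.1.le, hx.2.trans ht.2⟩) (eA_ne_top (h.memL2H2.1 x (hsub hx)).2)
  rw [H0] at HS
  have HSre : HasSum (fun k => ∫ x in Ioc 0 t, (H k x).re) 0 := by
    have := Complex.hasSum_re HS
    refine this.congr_fun ?_
    intro k
    exact integral_re (Hint k)
  -- coefficientwise inequality
  set L : Freq → ℝ := fun k => lam k * ‖u t k‖ ^ 2 +
    ν * lam k ^ 2 * ∫ x in Ioc 0 t, ‖u x k‖ ^ 2 with hL
  set R : Freq → ℝ := fun k => lam k ^ (1 : ℝ) * ‖θ k‖ ^ 2 + ν⁻¹ * t * (lam k ^ (0 : ℝ) * ‖f k‖ ^ 2) -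
    2 * ∫ x in Ioc 0 t, (H k x).re with hR
  have iu : ∀ k, IntegrableOn (fun x => ‖u x k‖ ^ 2) (Ioc 0 t) := fun k =>
    ((((hh.cont k).mono (Icc_subset_Icc le_rfl ht.2)).norm.pow 2).integrableOn_Icc).mono_set
      Ioc_subset_Icc_self
  have hLR : ∀ k, L k ≤ R k := by
    intro k
    have hl := lam_pos k
    have iH : IntegrableOn (fun x => (b k x * (starRingEnd ℂ) (u x k)).re) (Ioc 0 t) := by
      have := ((Hint k).re).const_mul (lam k)⁻¹
      refine this.congr (Filter.Eventually.of_forall fun x => ?_)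
      simp only [hH]
      change (lam k)⁻¹ * (((lam k : ℝ) : ℂ) * (b k x * (starRingEnd ℂ) (u x k))).re = _
      rw [Complex.re_ofReal_mul]
      field_simp
    have i0 : IntegrableOn (fun _ : ℝ => (ν * lam k)⁻¹ * ‖f k‖ ^ 2) (Ioc 0 t) :=
      integrableOn_const (by simp)
    have key := scalar_energy (μ := ν * lam k)
      (φ := fun x => (ν * lam k * ‖u x k‖ ^ 2 + (ν * lam k)⁻¹ * ‖f k‖ ^ 2) -
        2 * (b k x * (starRingEnd ℂ) (u x k)).re) ht.1
      ((hh.cont k).mono (Icc_subset_Icc le_rfl ht.2))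
      (fun x hx => hh.deriv k x ⟨hx.1, hx.2.le.trans ht.2⟩)
      (Integrable.sub (Integrable.fun_add ((iu k).const_mul _) i0) (iH.const_mul 2))
      (fun x _ => by
        have h1 : (f k * (starRingEnd ℂ) (u x k)).re ≤ ‖f k‖ * ‖u x k‖ := by
          refine (Complex.re_le_norm _).trans ?_
          rw [norm_mul, Complex.norm_conj]
        have h2 : 0 ≤ (ν * lam k)⁻¹ * (‖f k‖ - (ν * lam k) * ‖u x k‖) ^ 2 := by positivity
        have h3 : (ν * lam k)⁻¹ * (‖f k‖ - (ν * lam k) * ‖u x k‖) ^ 2 =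
          (ν * lam k) * ‖u x k‖ ^ 2 + (ν * lam k)⁻¹ * ‖f k‖ ^ 2 - 2 * (‖f k‖ * ‖u x k‖) := by
          field_simp; ring
        have h4 : ((f - Bc (u x) (u x)) k * (starRingEnd ℂ) (u x k)).re =
          (f k * (starRingEnd ℂ) (u x k)).re - (b k x * (starRingEnd ℂ) (u x k)).re := by
          rw [Pi.sub_apply, sub_mul, Complex.sub_re]
        rw [h4]; linarith)
    rw [integral_sub (Integrable.fun_add ((iu k).const_mul _) i0) (iH.const_mul _),
      integral_add ((iu k).const_mul _) i0, integral_const_mul, integral_const_mul,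
      integral_const_mul, setIntegral_const] at key
    have e1 : ∫ x in Ioc 0 t, (H k x).re =
        lam k * ∫ x in Ioc 0 t, (b k x * (starRingEnd ℂ) (u x k)).re := by
      rw [← integral_const_mul]
      refine integral_congr_ae (Filter.Eventually.of_forall fun x => ?_)
      simp only [hH]
      rw [Complex.re_ofReal_mul]
    have e2 : volume.real (Ioc 0 t) = t := by simp [ht.1]
    rw [e2, h.init, smul_eq_mul] at key
    simp only [hL, hR]
    rw [e1, Real.rpow_one, Real.rpow_zero]
    have key2 := mul_le_mul_of_nonneg_left key hl.le
    have e3 : lam k * ((ν * lam k)⁻¹ * (t * ‖f k‖ ^ 2)) = ν⁻¹ * t * ‖f k‖ ^ 2 := by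
      field_simp
    nlinarith [key2, e3]
  have hL0 : ∀ k, 0 ≤ L k := fun k => by
    have hl := lam_pos k
    have : 0 ≤ ∫ x in Ioc 0 t, ‖u x k‖ ^ 2 := integral_nonneg fun x => by positivity
    simp only [hL]; positivity
  have hRs : HasSum R (hSq 1 θ + ν⁻¹ * t * hSq 0 f - 2 * 0) :=
    ((fin_of_eA hθ).hasSum.add ((fin_of_eA hf).hasSum.mul_left _)).sub (HSre.mul_left 2)
  have hLHS : eA 1 (u t) + ENNReal.ofReal ν * ∫⁻ τ in Ioc 0 t, eA 2 (u τ) =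
      ∑' k, ENNReal.ofReal (L k) := by
    rw [hh.lint ht.2, ← ENNReal.tsum_mul_left]
    unfold eA
    rw [← ENNReal.tsum_add]
    refine tsum_congr fun k => ?_
    have hl := lam_pos k
    have p1 : 0 ≤ ∫ x in Ioc 0 t, ‖u x k‖ ^ 2 := integral_nonneg fun x => by positivity
    simp only [hL]
    rw [ENNReal.ofReal_add (by positivity) (by positivity), eA_term, Real.rpow_one]
    congr 1
    have : ∫⁻ x in Ioc 0 t, ‖u x k‖ₑ ^ 2 = ENNReal.ofReal (∫ x in Ioc 0 t, ‖u x k‖ ^ 2) := by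
      rw [ofReal_integral_eq_lintegral_ofReal (iu k)
        (Filter.Eventually.of_forall fun x => by positivity)]
      refine lintegral_congr fun x => ?_
      rw [ENNReal.ofReal_pow (norm_nonneg _), ofReal_norm]
    rw [this, ← ENNReal.ofReal_mul (by positivity), ← ENNReal.ofReal_mul (by positivity)]
    norm_num [mul_assoc]
  rw [hLHS]
  calc ∑' k, ENNReal.ofReal (L k) ≤ ∑' k, ENNReal.ofReal (R k) :=
        ENNReal.tsum_le_tsum fun k => ENNReal.ofReal_le_ofReal (hLR k)
    _ = ENNReal.ofReal (∑' k, R k) :=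
        (ENNReal.ofReal_tsum_of_nonneg (fun k => (hL0 k).trans (hLR k)) hRs.summable).symm
    _ = _ := by
        have := hSq_nonneg 0 f
        have := hSq_nonneg 1 θ
        have := ht.1
        rw [hRs.tsum_eq, mul_zero, sub_zero, ENNReal.ofReal_add (by positivity) (by positivity),
          ENNReal.ofReal_mul (by positivity), eA_of_fin (fin_of_eA hθ), eA_of_fin (fin_of_eA hf)]

end NS

end NS2D

namespace NS2D
open scoped ENNReal NNReal

/-! ### Uniform regularity bounds -/

/-- Uniform-in-time `H^s` bound and `L²H^{s+1}` bound. -/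
def Bnd (T s : ℝ) (M : ℝ≥0∞) (u : ℝ → Coef) : Prop :=
  (∀ t ∈ Icc 0 T, eA s (u t) ≤ M) ∧ ∫⁻ τ in Ioc 0 T, eA (s + 1) (u τ) ≤ M

lemma bnd_of_energy {ν T : ℝ} (hν : 0 < ν) (hT : 0 < T) {s : ℝ} {u : ℝ → Coef} {A : ℝ≥0∞}
    (h : ∀ t ∈ Icc 0 T, eA s (u t) + ENNReal.ofReal ν * ∫⁻ τ in Ioc 0 t, eA (s + 1) (u τ) ≤ A) :
    Bnd T s ((1 + (ENNReal.ofReal ν)⁻¹) * A) u := by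
  constructor
  · intro t ht
    calc eA s (u t) ≤ A := le_self_add.trans (h t ht)
      _ = 1 * A := by ring
      _ ≤ _ := by gcongr; exact le_self_add
  · have h1 := le_add_self.trans (h T ⟨hT.le, le_rfl⟩)
    have hn : ENNReal.ofReal ν ≠ 0 := by simpa using hν
    calc ∫⁻ τ in Ioc 0 T, eA (s + 1) (u τ)
        = (ENNReal.ofReal ν)⁻¹ * (ENNReal.ofReal ν * ∫⁻ τ in Ioc 0 T, eA (s + 1) (u τ)) := by
          rw [← mul_assoc, ENNReal.inv_mul_cancel hn ENNReal.ofReal_ne_top, one_mul]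
      _ ≤ (ENNReal.ofReal ν)⁻¹ * A := by gcongr
      _ ≤ _ := by gcongr; exact le_add_self

lemma step_bnd {ν T : ℝ} (hν : 0 < ν) (hT : 0 < T) {s : ℝ} {f θ : Coef} {u : ℝ → Coef}
    {A D F : ℝ≥0∞} (h : IsNSSol ν f T θ u) (hθ : eA 1 θ ≠ ∞)
    (hA : eA s θ ≤ A) (hF : eA (s - 1) f ≤ F)
    (hD : ∫⁻ τ in Ioc 0 T, eA (s - 1) (Bc (u τ) (u τ)) ≤ D) :
    Bnd T s ((1 + (ENNReal.ofReal ν)⁻¹) *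
      (A + ENNReal.ofReal ν⁻¹ * (4 * (F * ENNReal.ofReal T + D)))) u := by
  apply bnd_of_energy hν hT
  intro t ht
  refine ((h.heat hθ).energy hν s ht).trans ?_
  rw [h.init]
  gcongr
  calc ∫⁻ τ in Ioc 0 t, eA (s - 1) (f - Bc (u τ) (u τ))
      ≤ ∫⁻ τ in Ioc 0 T, eA (s - 1) (f - Bc (u τ) (u τ)) :=
        lintegral_mono_set (Ioc_subset_Ioc le_rfl ht.2)
    _ ≤ ∫⁻ τ in Ioc 0 T, 4 * (eA (s - 1) f + eA (s - 1) (Bc (u τ) (u τ))) :=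
        lintegral_mono fun τ => eA_sub_le _ _ _
    _ = 4 * (eA (s - 1) f * ENNReal.ofReal T + ∫⁻ τ in Ioc 0 T, eA (s - 1) (Bc (u τ) (u τ))) := by
        rw [lintegral_const_mul' _ _ (by finiteness), lintegral_add_left measurable_const]
        simp
    _ ≤ _ := by gcongr

lemma conv_bound {T s : ℝ} (hs : 1 ≤ s) {u : ℝ → Coef} {M M' : ℝ≥0∞} (hM : M ≠ ∞)
    (h1 : ∀ t ∈ Icc 0 T, eA (3 / 2) (u t) ≤ M) (h2 : ∫⁻ τ in Ioc 0 T, eA s (u τ) ≤ M') :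
    ∫⁻ τ in Ioc 0 T, eA (s - 1) (Bc (u τ) (u τ)) ≤ 2 * kb s * M * M' := by
  have := kb_ne_top s
  calc ∫⁻ τ in Ioc 0 T, eA (s - 1) (Bc (u τ) (u τ))
      ≤ ∫⁻ τ in Ioc 0 T, (2 * kb s * M) * eA s (u τ) := by
        refine setLIntegral_mono' measurableSet_Ioc fun τ hτ => ?_
        have h3 := h1 τ ⟨hτ.1.le, hτ.2⟩
        calc _ ≤ kb s * (eA s (u τ) * eA (3 / 2) (u τ) + eA (3 / 2) (u τ) * eA s (u τ)) :=
              eA_Bc hs _ _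
          _ = 2 * kb s * eA (3 / 2) (u τ) * eA s (u τ) := by ring
          _ ≤ _ := by gcongr
    _ = 2 * kb s * M * ∫⁻ τ in Ioc 0 T, eA s (u τ) := lintegral_const_mul' _ _ (by finiteness)
    _ ≤ _ := by gcongr

lemma reg_one {ν T : ℝ} (hν : 0 < ν) (hT : 0 < T) {f : Coef} (hf : eA 0 f ≠ ∞) {A : ℝ≥0∞}
    (hA : A ≠ ∞) : ∃ M : ℝ≥0∞, M ≠ ∞ ∧ ∀ θ u, IsNSSol ν f T θ u → eA 1 θ ≤ A → Bnd T 1 M u := by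
  have hn : ENNReal.ofReal ν ≠ 0 := by simpa using hν
  refine ⟨(1 + (ENNReal.ofReal ν)⁻¹) * (A + ENNReal.ofReal (ν⁻¹ * T) * eA 0 f), ?_, ?_⟩
  · have : (ENNReal.ofReal ν)⁻¹ ≠ ∞ := ENNReal.inv_ne_top.2 hn
    finiteness
  intro θ u h hθ
  apply bnd_of_energy hν hT
  intro t ht
  have := h.enst hν (ne_top_of_le_ne_top hA hθ) hf ht
  norm_num1
  refine this.trans ?_
  gcongr
  exact ht.2

lemma reg_th {ν T : ℝ} (hν : 0 < ν) (hT : 0 < T) {f : Coef} (hf : eA 1 f ≠ ∞) {A : ℝ≥0∞}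
    (hA : A ≠ ∞) :
    ∃ M : ℝ≥0∞, M ≠ ∞ ∧ ∀ θ u, IsNSSol ν f T θ u → eA 2 θ ≤ A → Bnd T (3 / 2) M u := by
  have hn : ENNReal.ofReal ν ≠ 0 := by simpa using hν
  have hf0 : eA 0 f ≠ ∞ := ne_top_of_le_ne_top hf (eA_mono (by norm_num) _)
  obtain ⟨M, hM, h1⟩ := reg_one hν hT hf0 hA
  have hk := kb_ne_top (3 / 2)
  refine ⟨(1 + (ENNReal.ofReal ν)⁻¹) * (A + ENNReal.ofReal ν⁻¹ * (4 * (eA 1 f * ENNReal.ofReal T +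
    (4 * kb (3 / 2) * M) * M))), ?_, ?_⟩
  · have : (ENNReal.ofReal ν)⁻¹ ≠ ∞ := ENNReal.inv_ne_top.2 hn
    finiteness
  intro θ u h hθ
  have hθ1 : eA 1 θ ≤ A := (eA_mono (by norm_num) _).trans hθ
  have hb := h1 θ u h hθ1
  have hb2 := hb.2
  norm_num1 at hb2
  apply step_bnd hν hT h (ne_top_of_le_ne_top hA hθ1) ((eA_mono (by norm_num) _).trans hθ)
    (eA_mono (by norm_num) _)
  calc ∫⁻ τ in Ioc 0 T, eA (3 / 2 - 1) (Bc (u τ) (u τ))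
      ≤ ∫⁻ τ in Ioc 0 T, (4 * kb (3 / 2) * M) * eA 2 (u τ) := by
        refine setLIntegral_mono' measurableSet_Ioc fun τ hτ => ?_
        have h3 := hb.1 τ ⟨hτ.1.le, hτ.2⟩
        calc _ ≤ 2 * kb (3 / 2) * (eA (3 / 2) (u τ) * eA (3 / 2) (u τ)) := eA_Bc' le_rfl _ _
          _ = 2 * kb (3 / 2) * eA (3 / 2) (u τ) ^ 2 := by ring
          _ ≤ 2 * kb (3 / 2) * (2 * (eA 1 (u τ) * eA 2 (u τ))) := by gcongr; exact eA_interp _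
          _ = 4 * kb (3 / 2) * eA 1 (u τ) * eA 2 (u τ) := by ring
          _ ≤ _ := by gcongr
    _ = 4 * kb (3 / 2) * M * ∫⁻ τ in Ioc 0 T, eA 2 (u τ) :=
        lintegral_const_mul' _ _ (by finiteness)
    _ ≤ _ := by gcongr

lemma reg {ν T : ℝ} (hν : 0 < ν) (hT : 0 < T) {f : Coef} {A : ℝ≥0∞}
    (hA : A ≠ ∞) (n : ℕ) (hf : eA ((n : ℝ) + 1) f ≠ ∞) :
    ∃ M : ℝ≥0∞, M ≠ ∞ ∧ ∀ θ u, IsNSSol ν f T θ u → eA ((n : ℝ) + 2) θ ≤ A →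
      Bnd T ((n : ℝ) + 2) M u := by
  have hn : ENNReal.ofReal ν ≠ 0 := by simpa using hν
  have hni : (ENNReal.ofReal ν)⁻¹ ≠ ∞ := ENNReal.inv_ne_top.2 hn
  induction n with
  | zero =>
    norm_num only [Nat.cast_zero, zero_add] at hf ⊢
    obtain ⟨M, hM, h1⟩ := reg_th hν hT hf hA
    obtain ⟨M', hM', h1'⟩ := reg_one hν hT
      (ne_top_of_le_ne_top hf (eA_mono (by norm_num) _)) hA
    have hk := kb_ne_top 2
    refine ⟨(1 + (ENNReal.ofReal ν)⁻¹) * (A + ENNReal.ofReal ν⁻¹ * (4 * (eA 1 f * ENNReal.ofReal T +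
      (2 * kb 2 * M) * M'))), by finiteness, ?_⟩
    intro θ u h hθ
    have hθ1 : eA 1 θ ≤ A := (eA_mono (by norm_num) _).trans hθ
    have hb2 := (h1' θ u h hθ1).2
    norm_num1 at hb2
    apply step_bnd hν hT h (ne_top_of_le_ne_top hA hθ1) hθ (eA_mono (by norm_num) _)
    exact conv_bound (by norm_num) hM (h1 θ u h hθ).1 hb2
  | succ n ih =>
    have en : ((n + 1 : ℕ) : ℝ) = (n : ℝ) + 1 := by push_cast; ring
    have hn0 : (0 : ℝ) ≤ n := Nat.cast_nonneg n
    rw [en] at hf ⊢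
    obtain ⟨M, hM, h1⟩ := ih (ne_top_of_le_ne_top hf (eA_mono (by linarith) _))
    have hk := kb_ne_top ((n : ℝ) + 1 + 2)
    refine ⟨(1 + (ENNReal.ofReal ν)⁻¹) * (A + ENNReal.ofReal ν⁻¹ *
      (4 * (eA ((n : ℝ) + 1 + 1) f * ENNReal.ofReal T +
      (2 * kb ((n : ℝ) + 1 + 2) * M) * M))), by finiteness, ?_⟩
    intro θ u h hθ
    have hθ2 : eA ((n : ℝ) + 2) θ ≤ A := (eA_mono (by linarith) _).trans hθ
    have hθ1 : eA 1 θ ≤ A := (eA_mono (by linarith) _).trans hθ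
    obtain ⟨hb1, hb2⟩ := h1 θ u h hθ2
    apply step_bnd hν hT h (ne_top_of_le_ne_top hA hθ1) hθ (eA_mono (by linarith) _)
    refine conv_bound (by linarith) hM (fun t ht => (eA_mono (by linarith) _).trans (hb1 t ht)) ?_
    rwa [show (n : ℝ) + 1 + 2 = (n : ℝ) + 2 + 1 by ring]

/-! ### Gronwall -/

lemma gronwall {T K : ℝ} (hK : 0 < K) {y : ℝ → ℝ≥0∞} {A M : ℝ≥0∞} (hM : M ≠ ∞)
    (hb : ∀ t ∈ Icc 0 T, y t ≤ M)
    (h : ∀ t ∈ Icc 0 T, y t ≤ A + ENNReal.ofReal K * ∫⁻ τ in Ioc 0 t, y τ) :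
    ∀ t ∈ Icc 0 T, y t ≤ ENNReal.ofReal (Real.exp (2 * K * T)) * (2 * A) := by
  set w : ℝ → ℝ≥0∞ := fun t => ENNReal.ofReal (Real.exp (2 * K * t)) with hw
  set w' : ℝ → ℝ≥0∞ := fun t => ENNReal.ofReal (Real.exp (-(2 * K * t))) with hw'
  have ww : ∀ t, w t * w' t = 1 := fun t => by
    simp only [hw, hw']
    rw [← ENNReal.ofReal_mul (Real.exp_pos _).le, ← Real.exp_add]; simp
  set Y : ℝ≥0∞ := ⨆ t ∈ Icc 0 T, w' t * y t with hY
  have hYt : ∀ t ∈ Icc 0 T, w' t * y t ≤ Y := fun t ht => le_iSup₂_of_le t ht le_rfl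
  have hyY : ∀ t ∈ Icc 0 T, y t ≤ w t * Y := fun t ht => by
    calc y t = w t * (w' t * y t) := by rw [← mul_assoc, ww, one_mul]
      _ ≤ _ := by gcongr; exact hYt t ht
  have hw1 : ∀ t ∈ Icc 0 T, w' t ≤ 1 := fun t ht => by
    simp only [hw', ENNReal.ofReal_le_one, Real.exp_le_one_iff]
    have := ht.1
    have : 0 ≤ 2 * K * t := by positivity
    linarith
  have hYM : Y ≤ M := iSup₂_le fun t ht => by
    calc w' t * y t ≤ 1 * M := by gcongr; exacts [hw1 t ht, hb t ht]
      _ = M := one_mul _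
  have hYf : Y ≠ ∞ := ne_top_of_le_ne_top hM hYM
  have hwi : ∀ t ∈ Icc 0 T, ENNReal.ofReal K * ∫⁻ τ in Ioc 0 t, w τ ≤ 2⁻¹ * w t := by
    intro t ht
    have hi : IntegrableOn (fun τ => Real.exp (2 * K * τ)) (Ioc 0 t) :=
      ((by fun_prop : Continuous fun τ => Real.exp (2 * K * τ)).integrableOn_Icc).mono_set
        Ioc_subset_Icc_self
    have e1 : ∫⁻ τ in Ioc 0 t, w τ = ENNReal.ofReal (∫ τ in Ioc 0 t, Real.exp (2 * K * τ)) := by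
      rw [ofReal_integral_eq_lintegral_ofReal hi
        (Filter.Eventually.of_forall fun x => (Real.exp_pos _).le)]
    have e2 : ∫ τ in Ioc 0 t, Real.exp (2 * K * τ) = (2 * K)⁻¹ * (Real.exp (2 * K * t) - 1) := by
      rw [← intervalIntegral.integral_of_le ht.1,
        intervalIntegral.integral_comp_mul_left (fun x => Real.exp x) (by positivity)]
      simp
    have e3 : (2 : ℝ≥0∞)⁻¹ = ENNReal.ofReal 2⁻¹ := by
      rw [ENNReal.ofReal_inv_of_pos (by norm_num)]; simp
    rw [e1, e2, e3, ← ENNReal.ofReal_mul hK.le]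
    simp only [hw]
    rw [← ENNReal.ofReal_mul (by norm_num)]
    apply ENNReal.ofReal_le_ofReal
    field_simp
    linarith
  have hY2 : Y ≤ A + 2⁻¹ * Y := iSup₂_le fun t ht => by
    calc w' t * y t ≤ w' t * (A + ENNReal.ofReal K * ∫⁻ τ in Ioc 0 t, y τ) := by
          gcongr; exact h t ht
      _ ≤ w' t * (A + ENNReal.ofReal K * ∫⁻ τ in Ioc 0 t, Y * w τ) := by
          refine mul_le_mul_right (add_le_add le_rfl (mul_le_mul_right ?_ _)) _
          refine setLIntegral_mono' measurableSet_Ioc fun τ hτ => ?_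
          rw [mul_comm]; exact hyY τ ⟨hτ.1.le, hτ.2.trans ht.2⟩
      _ = w' t * A + w' t * (Y * (ENNReal.ofReal K * ∫⁻ τ in Ioc 0 t, w τ)) := by
          rw [lintegral_const_mul' _ _ hYf]; ring
      _ ≤ 1 * A + w' t * (Y * (2⁻¹ * w t)) := by
          exact add_le_add (mul_le_mul_left (hw1 t ht) _)
            (mul_le_mul_right (mul_le_mul_right (hwi t ht) _) _)
      _ = A + 2⁻¹ * Y * (w t * w' t) := by ring
      _ = _ := by rw [ww, mul_one]
  have hY3 : Y ≤ 2 * A := by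
    have h2 : Y = 2⁻¹ * Y + 2⁻¹ * Y := by
      rw [← add_mul, ENNReal.inv_two_add_inv_two, one_mul]
    have h3 : 2⁻¹ * Y ≤ A := by
      have hf : 2⁻¹ * Y ≠ ∞ := ENNReal.mul_ne_top (by simp) hYf
      refine (ENNReal.add_le_add_iff_right hf).1 ?_
      rw [← h2]; exact hY2
    calc Y = 2⁻¹ * Y + 2⁻¹ * Y := h2
      _ ≤ A + A := by gcongr
      _ = _ := by ring
  intro t ht
  refine (hyY t ht).trans ?_
  refine mul_le_mul' ?_ hY3
  refine ENNReal.ofReal_le_ofReal (Real.exp_le_exp.2 ?_)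
  have := ht.2
  gcongr

end NS2D

namespace NS2D
open scoped ENNReal NNReal

/-! ### Differences and the linearisation -/

lemma HeatEq.sub {ν T : ℝ} {y g y' g' : ℝ → Coef} (h : HeatEq ν T y g) (h' : HeatEq ν T y' g') :
    HeatEq ν T (fun t => y t - y' t) (fun t => g t - g' t) where
  cont k := (h.cont k).sub (h'.cont k)
  deriv k t ht := by
    refine ((h.deriv k t ht).sub (h'.deriv k t ht)).congr_deriv ?_
    simp only [Pi.sub_apply]; ring

lemma HeatEq.congr {ν T : ℝ} {y g g' : ℝ → Coef} (h : HeatEq ν T y g)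
    (hg : ∀ t ∈ Ioc 0 T, g t = g' t) : HeatEq ν T y g' where
  cont := h.cont
  deriv k t ht := by rw [← hg t ht]; exact h.deriv k t ht

lemma heat_gronwall {ν T : ℝ} (hν : 0 < ν) {K : ℝ≥0∞} (hK : K ≠ ∞) (s : ℝ) :
    ∃ C : ℝ≥0∞, C ≠ ∞ ∧ ∀ (y g : ℝ → Coef) (D M : ℝ≥0∞), HeatEq ν T y g → M ≠ ∞ →
      (∀ t ∈ Icc 0 T, eA s (y t) ≤ M) →
      (∀ t ∈ Ioc 0 T, eA (s - 1) (g t) ≤ D + K * eA s (y t)) →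
      ∀ t ∈ Icc 0 T, eA s (y t) ≤ C * (eA s (y 0) + D) := by
  set K' : ℝ := (ENNReal.ofReal ν⁻¹ * K).toReal + 1 with hK'
  have hK0 : 0 < K' := by positivity
  have hKK : ENNReal.ofReal ν⁻¹ * K ≤ ENNReal.ofReal K' := by
    rw [← ENNReal.ofReal_toReal (a := ENNReal.ofReal ν⁻¹ * K) (by finiteness)]
    exact ENNReal.ofReal_le_ofReal (by linarith)
  refine ⟨ENNReal.ofReal (Real.exp (2 * K' * T)) * (2 * (1 + ENNReal.ofReal ν⁻¹ * ENNReal.ofReal T)),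
    by finiteness, ?_⟩
  intro y g D M h hM hb hg t ht
  have key := gronwall hK0 (y := fun t => eA s (y t))
    (A := eA s (y 0) + ENNReal.ofReal ν⁻¹ * (D * ENNReal.ofReal T)) hM hb (fun t ht => ?_) t ht
  · refine key.trans ?_
    rw [mul_assoc (ENNReal.ofReal _) (2 * _), mul_assoc 2 (1 + _)]
    refine mul_le_mul_right (mul_le_mul_right ?_ _) _
    calc eA s (y 0) + ENNReal.ofReal ν⁻¹ * (D * ENNReal.ofReal T)
        ≤ (eA s (y 0) + ENNReal.ofReal ν⁻¹ * (D * ENNReal.ofReal T)) +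
          (D + ENNReal.ofReal ν⁻¹ * ENNReal.ofReal T * eA s (y 0)) := le_self_add
      _ = _ := by ring
  · refine le_self_add.trans ((h.energy hν s ht).trans ?_)
    calc eA s (y 0) + ENNReal.ofReal ν⁻¹ * ∫⁻ τ in Ioc 0 t, eA (s - 1) (g τ)
        ≤ eA s (y 0) + ENNReal.ofReal ν⁻¹ * ∫⁻ τ in Ioc 0 t, (D + K * eA s (y τ)) := by
          refine add_le_add le_rfl (mul_le_mul_right ?_ _)
          exact setLIntegral_mono' measurableSet_Ioc fun τ hτ => hg τ ⟨hτ.1, hτ.2.trans ht.2⟩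
      _ = eA s (y 0) + ENNReal.ofReal ν⁻¹ * (D * ENNReal.ofReal t) +
          ENNReal.ofReal ν⁻¹ * K * ∫⁻ τ in Ioc 0 t, eA s (y τ) := by
          rw [lintegral_add_left measurable_const, lintegral_const_mul' _ _ hK]
          simp; ring
      _ ≤ _ := by
          gcongr
          exact ht.2

lemma eA_B2 {s : ℝ} (hs : 3 / 2 ≤ s) {M : ℝ≥0∞} {c d y : Coef} (hc : eA s c ≤ M) (hd : eA s d ≤ M) :
    eA (s - 1) (Bc c y + Bc y d) ≤ 16 * kb s * M * eA s y := by
  calc eA (s - 1) (Bc c y + Bc y d) ≤ 4 * (eA (s - 1) (Bc c y) + eA (s - 1) (Bc y d)) :=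
        eA_add_le _ _ _
    _ ≤ 4 * (2 * kb s * (M * eA s y) + 2 * kb s * (eA s y * M)) := by
        gcongr
        · exact (eA_Bc' hs _ _).trans (by gcongr)
        · exact (eA_Bc' hs _ _).trans (by gcongr)
    _ = _ := by ring

lemma Bc_diff {u u' : Coef} (hu : eA (3 / 2) u ≠ ∞) (hu' : eA (3 / 2) u' ≠ ∞) :
    Bc u' u' - Bc u u = Bc u' (u' - u) + Bc (u' - u) u := by
  have hv := eA_sub_ne_top hu' hu
  have e1 := Bc_add_right hu' hv hu
  have e2 := Bc_add_left hv hu hu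
  rw [sub_add_cancel] at e1 e2
  nth_rw 1 [e1, e2]
  abel

lemma Bc_diff2 {u u' U : Coef} (hu : eA (3 / 2) u ≠ ∞) (hu' : eA (3 / 2) u' ≠ ∞)
    (hU : eA (3 / 2) U ≠ ∞) :
    Bc u' (u' - u) + Bc (u' - u) u - (Bc u U + Bc U u) =
      Bc (u' - u) (u' - u) + (Bc u (u' - u - U) + Bc (u' - u - U) u) := by
  have hv := eA_sub_ne_top hu' hu
  have hr := eA_sub_ne_top hv hU
  have e1 := Bc_add_left hv hu hv
  have e2 := Bc_add_right hu hr hU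
  have e3 := Bc_add_left hr hU hu
  rw [sub_add_cancel] at e1 e2 e3
  rw [e1, e3, e2]
  abel

theorem main_est {s ν T : ℝ} (hs : 3 / 2 ≤ s) (hν : 0 < ν) {M : ℝ≥0∞} (hM : M ≠ ∞) (f : Coef) :
    ∃ C : ℝ≥0∞, C ≠ ∞ ∧ ∀ (θ θ' : Coef) (u u' U : ℝ → Coef),
      IsNSSol ν f T θ u → IsNSSol ν f T θ' u' →
      (∀ t ∈ Icc 0 T, eA s (u t) ≤ M) → (∀ t ∈ Icc 0 T, eA s (u' t) ≤ M) →
      IsLinSol ν u T (θ' - θ) U → ContH s T U → MemL2H (s + 1) T U →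
      ∀ t ∈ Icc 0 T, eA s (u' t - u t - U t) ≤ C * eA s (θ' - θ) ^ 2 := by
  have hk := kb_ne_top s
  obtain ⟨C₁, hC₁, G₁⟩ := heat_gronwall (T := T) hν (K := 16 * kb s * M) (by finiteness) s
  obtain ⟨C₂, hC₂, G₂⟩ := heat_gronwall (T := T) hν (K := 4 * (16 * kb s * M)) (by finiteness) s
  refine ⟨C₂ * (4 * (2 * kb s * C₁ ^ 2)), by finiteness, ?_⟩
  intro θ θ' u u' U hu hu' bu bu' hU cU mU t ht
  have hT0 : (0 : ℝ) ∈ Icc 0 T := ⟨le_rfl, ht.1.trans ht.2⟩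
  have fu : ∀ t ∈ Icc 0 T, eA s (u t) ≠ ∞ := fun t ht => ne_top_of_le_ne_top hM (bu t ht)
  have fu' : ∀ t ∈ Icc 0 T, eA s (u' t) ≠ ∞ := fun t ht => ne_top_of_le_ne_top hM (bu' t ht)
  have fv : ∀ t ∈ Icc 0 T, eA s (u' t - u t) ≠ ∞ := fun t ht =>
    eA_sub_ne_top (fu' t ht) (fu t ht)
  have fU : ∀ t ∈ Icc 0 T, eA s (U t) ≠ ∞ := fun t ht => by
    rcases ht.1.eq_or_lt with h0 | h0
    · rw [← h0, hU.init, ← hu.init, ← hu'.init]; exact fv 0 hT0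
    · exact ne_top_of_le_ne_top (eA_ne_top (mU.1 t ⟨h0, ht.2⟩).2) (eA_mono (by linarith) _)
  have hθ : eA 1 θ ≠ ∞ := by
    rw [← hu.init]; exact ne_top_of_le_ne_top (fu 0 hT0) (eA_mono (by linarith) _)
  have hθ' : eA 1 θ' ≠ ∞ := by
    rw [← hu'.init]; exact ne_top_of_le_ne_top (fu' 0 hT0) (eA_mono (by linarith) _)
  have lo : ∀ {c : Coef}, eA s c ≠ ∞ → eA (3 / 2) c ≠ ∞ := fun hc =>
    ne_top_of_le_ne_top hc (eA_mono hs _)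
  have oc : ∀ {t : ℝ}, t ∈ Ioc 0 T → t ∈ Icc 0 T := fun ht => ⟨ht.1.le, ht.2⟩
  -- the difference of the two solutions
  have Hv : HeatEq ν T (fun t => u' t - u t)
      (fun t => -(Bc (u' t) (u' t - u t) + Bc (u' t - u t) (u t))) :=
    ((hu'.heat hθ').sub (hu.heat hθ)).congr fun t ht => by
      rw [← Bc_diff (lo (fu t (oc ht))) (lo (fu' t (oc ht)))]
      abel
  have bv : ∀ t ∈ Icc 0 T, eA s (u' t - u t) ≤ C₁ * eA s (θ' - θ) := by
    intro t ht
    have := G₁ _ _ 0 (4 * (M + M)) Hv (by finiteness)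
      (fun t ht => (eA_sub_le _ _ _).trans (by gcongr; exacts [bu' t ht, bu t ht]))
      (fun t ht => by
        rw [eA_neg, zero_add]
        exact eA_B2 hs (bu' t (oc ht)) (bu t (oc ht))) t ht
    simpa only [hu.init, hu'.init, add_zero] using this
  -- the linearised flow
  have HU : HeatEq ν T U (fun t => -(Bc (u t) (U t) + Bc (U t) (u t))) :=
    { cont := fun k => cont_coef (by linarith) cU fU k
      deriv := fun k t ht => by
        refine (hU.deriv k t ht).congr_deriv ?_
        simp only [Pi.neg_apply, Pi.add_apply, Pi.zero_apply]; ring }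
  obtain ⟨N, hN', bU⟩ := bdd_of_cont cU fU
  -- the remainder
  have Hr : HeatEq ν T (fun t => u' t - u t - U t)
      (fun t => -(Bc (u' t - u t) (u' t - u t) +
        (Bc (u t) (u' t - u t - U t) + Bc (u' t - u t - U t) (u t)))) :=
    (Hv.sub HU).congr fun t ht => by
      rw [← Bc_diff2 (lo (fu t (oc ht))) (lo (fu' t (oc ht))) (lo (fU t (oc ht)))]
      abel
  have r0 : eA s (u' 0 - u 0 - U 0) = 0 := by
    rw [hU.init, hu.init, hu'.init, sub_self]; unfold eA; simp
  have fθ : eA s (θ' - θ) ≠ ∞ := by rw [← hu.init, ← hu'.init]; exact fv 0 hT0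
  have := G₂ _ _ (4 * (2 * kb s * (C₁ * eA s (θ' - θ)) ^ 2)) (4 * (C₁ * eA s (θ' - θ) + N)) Hr
    (by finiteness)
    (fun t ht => (eA_sub_le _ _ _).trans (by gcongr; exacts [bv t ht, bU t ht]))
    (fun t ht => by
      rw [eA_neg]
      refine (eA_add_le _ _ _).trans ?_
      rw [mul_add, mul_assoc 4 (16 * kb s * M)]
      have h1 := bv t (oc ht)
      refine add_le_add ?_ ?_
      · gcongr
        refine (eA_Bc' hs _ _).trans ?_
        rw [sq]
        gcongr
      · gcongr
        exact eA_B2 hs (bu t (oc ht)) (bu t (oc ht))) t ht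
  simp only [r0, zero_add] at this
  refine this.trans (le_of_eq ?_)
  ring

theorem main_thm (a : ℤ) (ha : 2 ≤ a) (T ν : ℝ) (hT : 0 < T) (hν : 0 < ν)
    (f : Coef) (hf : MemH ((a : ℝ) - 1) f) (B : ℝ) (hB : 0 < B) :
    ∃ C : ℝ, 0 < C ∧
      ∀ (θ θ' : Coef) (uθ uθ' : ℝ → Coef),
        MemH (a : ℝ) θ → MemH (a : ℝ) θ' → hN (a : ℝ) θ + hN (a : ℝ) θ' ≤ B →
        IsNSSol ν f T θ uθ → IsNSSol ν f T θ' uθ' →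
        ∀ U : ℝ → Coef, IsLinSol ν uθ T (θ' - θ) U → ContH (a : ℝ) T U →
          MemL2H ((a : ℝ) + 1) T U →
          ∀ t ∈ Icc (0:ℝ) T,
            hN (a : ℝ) (uθ' t - uθ t - U t) ≤ C * hN (a : ℝ) (θ' - θ) ^ 2 := by
  obtain ⟨n, hn⟩ := Int.eq_ofNat_of_zero_le (sub_nonneg.2 ha)
  have han : (a : ℝ) = (n : ℝ) + 2 := by
    have : a = (n : ℤ) + 2 := by omega
    rw [this]; push_cast; ring
  have ha2 : (2 : ℝ) ≤ a := by rw [han]; linarith [(Nat.cast_nonneg n : (0 : ℝ) ≤ n)]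
  obtain ⟨M, hM, hreg⟩ := reg hν hT (A := ENNReal.ofReal (B ^ 2)) ENNReal.ofReal_ne_top n
    (f := f) (by
      rw [show (n : ℝ) + 1 = (a : ℝ) - 1 by rw [han]; ring]
      exact eA_ne_top hf.2)
  rw [← han] at hreg
  obtain ⟨C, hC, hmain⟩ := main_est (s := a) (T := T) (by linarith) hν hM f
  refine ⟨Real.sqrt C.toReal + 1, by positivity, ?_⟩
  intro θ θ' u u' hθ hθ' hle hu hu' U hU cU mU t ht
  have bnd : ∀ c : Coef, MemH (a : ℝ) c → hN (a : ℝ) c ≤ B →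
      eA (a : ℝ) c ≤ ENNReal.ofReal (B ^ 2) := by
    intro c hc h
    rw [eA_of_fin hc.2]
    apply ENNReal.ofReal_le_ofReal
    exact (Real.sqrt_le_left hB.le).1 h
  have p1 : 0 ≤ hN (a : ℝ) θ := Real.sqrt_nonneg _
  have p2 : 0 ≤ hN (a : ℝ) θ' := Real.sqrt_nonneg _
  have key := hmain θ θ' u u' U hu hu' (hreg θ u hu (bnd θ hθ (by linarith))).1
    (hreg θ' u' hu' (bnd θ' hθ' (by linarith))).1 hU cU mU t ht
  have fd : eA (a : ℝ) (θ' - θ) ≠ ∞ := eA_sub_ne_top (eA_ne_top hθ'.2) (eA_ne_top hθ.2)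
  have fr : eA (a : ℝ) (u' t - u t - U t) ≠ ∞ := ne_top_of_le_ne_top (by finiteness) key
  rw [eA_of_fin (fin_of_eA fd), eA_of_fin (fin_of_eA fr), ← ENNReal.ofReal_toReal hC,
    ← ENNReal.ofReal_pow (hSq_nonneg _ _), ← ENNReal.ofReal_mul ENNReal.toReal_nonneg,
    ENNReal.ofReal_le_ofReal_iff (by positivity)] at key
  have h2 : hN (a : ℝ) (θ' - θ) ^ 2 = hSq (a : ℝ) (θ' - θ) := Real.sq_sqrt (hSq_nonneg _ _)
  rw [h2]
  have q := hSq_nonneg (a : ℝ) (θ' - θ)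
  calc hN (a : ℝ) (u' t - u t - U t) ≤ Real.sqrt (C.toReal * hSq (a : ℝ) (θ' - θ) ^ 2) :=
        Real.sqrt_le_sqrt key
    _ = Real.sqrt C.toReal * hSq (a : ℝ) (θ' - θ) := by
        rw [Real.sqrt_mul ENNReal.toReal_nonneg, Real.sqrt_sq q]
    _ ≤ _ := by gcongr; linarith

end NS2D

namespace NS2D

/-- Proposition `PropLinQuad`. Quadratic approximation of
the Navier–Stokes flow by its linearisation: for `a ∈ ℤ`, `a ≥ 2`, all
`f ∈ Ḣ^{a−1}_⋄` and `B > 0`, there is `C = C(ν,T,‖f‖_{Ḣ^{a−1}},a,B) > 0`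
such that for all `θ, θ' ∈ Ḣ^a_⋄` with `‖θ‖_{Ḣ^a} + ‖θ'‖_{Ḣ^a} ≤ B`,
`sup_{0≤t≤T} ‖u_{θ'}(t) − u_θ(t) − 𝕀_θ[θ'−θ](t)‖_{Ḣ^a} ≤ C ‖θ'−θ‖²_{Ḣ^a}`. -/
theorem statement9 (a : ℤ) (ha : 2 ≤ a) (T ν : ℝ) (hT : 0 < T) (hν : 0 < ν)
    (f : Coef) (hf : MemH ((a : ℝ) - 1) f) (B : ℝ) (hB : 0 < B) :
    ∃ C : ℝ, 0 < C ∧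
      ∀ (θ θ' : Coef) (uθ uθ' : ℝ → Coef),
        MemH (a : ℝ) θ → MemH (a : ℝ) θ' → hN (a : ℝ) θ + hN (a : ℝ) θ' ≤ B →
        IsNSSol ν f T θ uθ → IsNSSol ν f T θ' uθ' →
        ∀ U : ℝ → Coef, IsLinSol ν uθ T (θ' - θ) U → ContH (a : ℝ) T U →
          MemL2H ((a : ℝ) + 1) T U →
          ∀ t ∈ Icc (0:ℝ) T,
            hN (a : ℝ) (uθ' t - uθ t - U t) ≤ C * hN (a : ℝ) (θ' - θ) ^ 2 := by
  exact main_thm a ha T ν hT hν f hf B hB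

end NS2D
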